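/- arXiv:2201.03660 — 5 statements merged into one kernel-verified Lean document; each statement's English description precedes it below -/
import Mathlib

section
/- For every n ≥ 2 there exists a positive integer D (depending only on n) such that for every finite subgroup G of the orthogonal group O(n+1) there exists a nonzero G-invariant harmonic polynomial on ℝ^{n+1}, homogeneous of degree d with 1 ≤ d ≤ D; that is, the first nonzero eigenvalue of the scalar Laplacian on any spherical orbifold quotient S^n/G (with or without fixed points) is bounded above by a constant depending only on n. -/
/-!
The bound rests on a Jordan-type argument followed by a descent along the Laplacian.

In a finite group `G ⊂ O(n+1)` the elements at operator-norm distance less than `1/2` from the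
identity commute pairwise (`commute_of_near_one`, after Frobenius), so they generate an abelian
group `A`. As `n + 1 ≥ 3`, `A` preserves a quadratic form `q` which is not a multiple of `|x|²`
(`exists_invariant_quadratic`). Since `q(g x₀)` does not change when `g ∈ G` moves by less than
`1/2`, compactness bounds the number of values of `q` on the orbit `G x₀` of a unit vector by a
constant `M` depending on `n` alone (`exists_card_values_bound`).

Let `T` be a set of at most `M` numbers containing these values and `p = ∏_{τ ∈ T} (q - τ|x|²)`,
nonzero because the polynomial ring is a domain. Then `P = Σ_{g ∈ G} (p ∘ g)²` is a nonzero
`G`-invariant form of degree `4 |T|` vanishing at `x₀`, so it is not a multiple of a power of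
`|x|²` (`exists_invariant_not_radial`).

Finally, applying the Laplacian to such a `P` repeatedly until the result becomes radial, and
correcting the last non-radial form by a multiple of a power of `|x|²`, yields a nonzero invariant
harmonic form of positive degree at most `deg P` (`exists_harmonic_of_not_radial`).
-/

open MvPolynomial

/-- The Laplacian `Σ ∂²p/∂xᵢ²` of a polynomial in finitely many real variables. -/
noncomputable def polyLap {σ : Type*} [Fintype σ] (p : MvPolynomial σ ℝ) : MvPolynomial σ ℝ :=
  ∑ i, MvPolynomial.pderiv i (MvPolynomial.pderiv i p)

/-- A polynomial is harmonic if its Laplacian vanishes identically. -/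
def IsHarmonic {σ : Type*} [Fintype σ] (p : MvPolynomial σ ℝ) : Prop := polyLap p = 0

/-- The substitution `x ↦ g·x` on polynomials: the variable `xᵢ` is replaced by
`Σⱼ gᵢⱼ xⱼ`, so that `(aeval (matSub g) p)(x) = p(g·x)`. -/
noncomputable def matSub {m : ℕ} (g : Matrix (Fin m) (Fin m) ℝ) :
    Fin m → MvPolynomial (Fin m) ℝ :=
  fun i => ∑ j, MvPolynomial.C (g i j) * MvPolynomial.X j

/-! ### The substitution action and the Laplacian -/

lemma eval_matSub {m : ℕ} (g : Matrix (Fin m) (Fin m) ℝ) (x : Fin m → ℝ) (i : Fin m) :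
    eval x (matSub g i) = (g.mulVec x) i := by
  simp [matSub, Matrix.mulVec, dotProduct]

lemma eval_aeval_matSub {m : ℕ} (g : Matrix (Fin m) (Fin m) ℝ) (x : Fin m → ℝ)
    (p : MvPolynomial (Fin m) ℝ) :
    eval x (aeval (matSub g) p) = eval (g.mulVec x) p := by
  induction p using MvPolynomial.induction_on with
  | C a => simp
  | add p q hp hq => rw [map_add, map_add, hp, hq, map_add]
  | mul_X p i hp => rw [map_mul, map_mul, hp, aeval_X, eval_matSub, map_mul, eval_X]

lemma matSub_isHomogeneous {m : ℕ} (g : Matrix (Fin m) (Fin m) ℝ) (i : Fin m) :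
    (matSub g i).IsHomogeneous 1 := by
  refine IsHomogeneous.sum _ _ _ fun j _ => ?_
  simpa using (isHomogeneous_C (Fin m) (g i j)).mul (isHomogeneous_X ℝ j)

lemma aeval_matSub_isHomogeneous {m d : ℕ} (g : Matrix (Fin m) (Fin m) ℝ)
    {p : MvPolynomial (Fin m) ℝ} (hp : p.IsHomogeneous d) :
    (aeval (matSub g) p).IsHomogeneous d := by
  simpa using hp.aeval (matSub g) (fun i => matSub_isHomogeneous g i)

/-- The chain rule for a linear substitution. -/
lemma pderiv_aeval_matSub {m : ℕ} (g : Matrix (Fin m) (Fin m) ℝ) (i : Fin m)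
    (p : MvPolynomial (Fin m) ℝ) :
    pderiv i (aeval (matSub g) p) = ∑ j, C (g j i) * aeval (matSub g) (pderiv j p) := by
  have hX : ∀ k, pderiv i (matSub g k) = C (g k i) := by
    intro k
    simp [matSub, pderiv_X, Pi.single_apply]
  induction p using MvPolynomial.induction_on with
  | C a => simp
  | add p q hp hq => simp only [map_add, hp, hq, mul_add, Finset.sum_add_distrib]
  | mul_X p k hp =>
    simp only [map_mul, aeval_X, pderiv_mul, hp, hX, map_add, pderiv_X, mul_add,
      Finset.sum_add_distrib]
    congr 1
    · rw [Finset.sum_mul]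
      exact Finset.sum_congr rfl fun j _ => by ring
    · rw [Finset.sum_eq_single k]
      · simp [mul_comm]
      · intro j _ hj
        simp [hj.symm]
      · simp

lemma polyLap_add {σ : Type*} [Fintype σ] (p q : MvPolynomial σ ℝ) :
    polyLap (p + q) = polyLap p + polyLap q := by
  simp [polyLap, Finset.sum_add_distrib]

lemma polyLap_C_mul {σ : Type*} [Fintype σ] (a : ℝ) (p : MvPolynomial σ ℝ) :
    polyLap (C a * p) = C a * polyLap p := by
  simp [polyLap, Finset.mul_sum]

/-- The Laplacian commutes with orthogonal substitutions. -/
lemma polyLap_aeval_matSub {m : ℕ} (g : Matrix.orthogonalGroup (Fin m) ℝ)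
    (p : MvPolynomial (Fin m) ℝ) :
    polyLap (aeval (matSub (g : Matrix (Fin m) (Fin m) ℝ)) p) =
      aeval (matSub (g : Matrix (Fin m) (Fin m) ℝ)) (polyLap p) := by
  obtain ⟨M, hMg⟩ := g
  simp only
  have hg : M * M.transpose = 1 := (Matrix.mem_orthogonalGroup_iff (Fin m) ℝ).1 hMg
  have hd : ∀ j k, ∑ i, M j i * M k i = if j = k then 1 else 0 := by
    intro j k
    have := congrFun (congrFun hg j) k
    simpa [Matrix.mul_apply, Matrix.one_apply] using this
  calc polyLap (aeval (matSub M) p)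
      = ∑ i, ∑ j, ∑ k, C (M j i * M k i) * aeval (matSub M) (pderiv k (pderiv j p)) := by
        unfold polyLap
        refine Finset.sum_congr rfl fun i _ => ?_
        rw [pderiv_aeval_matSub, map_sum]
        refine Finset.sum_congr rfl fun j _ => ?_
        rw [pderiv_C_mul, pderiv_aeval_matSub, Finset.mul_sum]
        refine Finset.sum_congr rfl fun k _ => ?_
        rw [C_mul, mul_assoc]
    _ = ∑ j, ∑ k, C (∑ i, M j i * M k i) * aeval (matSub M) (pderiv k (pderiv j p)) := by
        rw [Finset.sum_comm]
        refine Finset.sum_congr rfl fun j _ => ?_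
        rw [Finset.sum_comm]
        refine Finset.sum_congr rfl fun k _ => ?_
        rw [map_sum, Finset.sum_mul]
    _ = aeval (matSub M) (polyLap p) := by
        simp [hd, polyLap]

/-- The polynomial `|x|² = Σ xᵢ²`. -/
noncomputable def radSq (m : ℕ) : MvPolynomial (Fin m) ℝ := ∑ i, X i ^ 2

lemma eval_radSq {m : ℕ} (x : Fin m → ℝ) : eval x (radSq m) = x ⬝ᵥ x := by
  simp [radSq, dotProduct, pow_two]

lemma radSq_isHomogeneous (m : ℕ) : (radSq m).IsHomogeneous 2 :=
  IsHomogeneous.sum _ _ _ fun i _ => by simpa using (isHomogeneous_X ℝ i).pow 2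

lemma dotProduct_orthogonal {m : ℕ} (g : Matrix.orthogonalGroup (Fin m) ℝ) (x y : Fin m → ℝ) :
    ((g : Matrix (Fin m) (Fin m) ℝ).mulVec x) ⬝ᵥ ((g : Matrix (Fin m) (Fin m) ℝ).mulVec y) =
      x ⬝ᵥ y := by
  have hg := (Matrix.mem_orthogonalGroup_iff' (Fin m) ℝ).1 g.2
  rw [Matrix.dotProduct_mulVec, ← Matrix.mulVec_transpose, Matrix.mulVec_mulVec]
  change Matrix.transpose _ * _ = 1 at hg
  rw [hg, Matrix.one_mulVec]

lemma aeval_matSub_radSq {m : ℕ} (g : Matrix.orthogonalGroup (Fin m) ℝ) :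
    aeval (matSub (g : Matrix (Fin m) (Fin m) ℝ)) (radSq m) = radSq m := by
  refine MvPolynomial.funext fun x => ?_
  rw [eval_aeval_matSub, eval_radSq, eval_radSq, dotProduct_orthogonal]

lemma polyLap_radSq_pow (m k : ℕ) :
    polyLap (radSq m ^ (k + 1)) = C (2 * (k + 1) * (2 * k + m) : ℝ) * radSq m ^ k := by
  have hr : ∀ i, pderiv i (radSq m) = C 2 * X i := by
    intro i
    simp [radSq, pderiv_X, Pi.single_apply, map_ofNat (C : ℝ →+* MvPolynomial (Fin m) ℝ)]
  have hi : ∀ i, pderiv i (pderiv i (radSq m ^ (k + 1))) =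
      C (2 * (k + 1) : ℝ) * (C (2 * k : ℝ) * radSq m ^ (k - 1) * X i ^ 2 + radSq m ^ k) := by
    intro i
    have h2 : pderiv i (radSq m ^ (k + 1)) = C (2 * (k + 1) : ℝ) * (radSq m ^ k * X i) := by
      rw [pderiv_pow, hr]
      simp only [C_mul, C_add, map_natCast, Nat.add_sub_cancel, C_1]
      push_cast
      ring
    rw [h2, pderiv_C_mul, pderiv_mul, pderiv_pow, hr, pderiv_X_self]
    simp only [C_mul, C_add, map_natCast, C_1]
    ring
  have hs : radSq m ^ (k - 1) * radSq m * C (2 * k : ℝ) = radSq m ^ k * C (2 * k : ℝ) := by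
    cases k with
    | zero => simp
    | succ k => simp [pow_succ]
  unfold polyLap
  simp_rw [hi]
  rw [← Finset.mul_sum, Finset.sum_add_distrib, ← Finset.mul_sum]
  change C (2 * (k + 1) : ℝ) * (C (2 * k : ℝ) * radSq m ^ (k - 1) * radSq m + _) = _
  have : C (2 * k : ℝ) * radSq m ^ (k - 1) * radSq m = radSq m ^ k * C (2 * k : ℝ) := by
    rw [← hs]; ring
  rw [this]
  simp
  ring

/-- Descent along the Laplacian: an invariant form of degree `2k` which is not a multiple of
`|x|^{2k}` gives a nonzero invariant harmonic form of positive degree at most `2k`. Either `ΔP`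
is again not radial, or `ΔP = c|x|^{2k-2}` and subtracting the multiple of `|x|^{2k}` with the
same Laplacian makes `P` harmonic. -/
lemma exists_harmonic_of_not_radial {m : ℕ} (hm : 0 < m)
    (G : Subgroup (Matrix.orthogonalGroup (Fin m) ℝ)) (k : ℕ) :
    ∀ P : MvPolynomial (Fin m) ℝ, P.IsHomogeneous (2 * k) →
      (∀ g ∈ G, aeval (matSub (g : Matrix (Fin m) (Fin m) ℝ)) P = P) →
      (¬ ∃ c : ℝ, P = C c * radSq m ^ k) →
      ∃ (p : MvPolynomial (Fin m) ℝ) (d : ℕ), p ≠ 0 ∧ 1 ≤ d ∧ d ≤ 2 * k ∧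
        p.IsHomogeneous d ∧ IsHarmonic p ∧
        ∀ g ∈ G, aeval (matSub (g : Matrix (Fin m) (Fin m) ℝ)) p = p := by
  induction k with
  | zero =>
    intro P hP _ hc
    refine absurd ⟨coeff 0 P, ?_⟩ hc
    rw [pow_zero, mul_one]
    exact (totalDegree_eq_zero_iff_eq_C).1 (Nat.le_zero.1 hP.totalDegree_le)
  | succ k ih =>
    intro P hP hG hc
    by_cases hL : ∃ c : ℝ, polyLap P = C c * radSq m ^ k
    · obtain ⟨c, hL⟩ := hL
      set a : ℝ := 2 * (k + 1) * (2 * k + m) with ha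
      have ha0 : a ≠ 0 := by positivity
      have hC : (C a : MvPolynomial (Fin m) ℝ) * C a⁻¹ = 1 := by
        rw [← C_mul, mul_inv_cancel₀ ha0, C_1]
      refine ⟨P + C (-(c * a⁻¹)) * radSq m ^ (k + 1), 2 * (k + 1), ?_, by omega, le_rfl, ?_, ?_, ?_⟩
      · intro h0
        refine hc ⟨c * a⁻¹, ?_⟩
        rw [C_neg] at h0
        linear_combination h0
      · refine hP.add ?_
        simpa using (isHomogeneous_C (Fin m) (-(c * a⁻¹))).mul
          ((radSq_isHomogeneous m).pow (k + 1))
      · unfold IsHarmonic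
        rw [polyLap_add, polyLap_C_mul, polyLap_radSq_pow, hL, ← ha, C_neg, C_mul]
        linear_combination (-C c * radSq m ^ k) * hC
      · intro g hg
        rw [map_add, map_mul, map_pow, aeval_matSub_radSq, hG g hg, aeval_C, algebraMap_eq]
    · have hhom : (polyLap P).IsHomogeneous (2 * k) := by
        refine IsHomogeneous.sum _ _ _ fun i _ => ?_
        simpa [mul_add] using (hP.pderiv (i := i)).pderiv (i := i)
      have hinv : ∀ g ∈ G,
          aeval (matSub (g : Matrix (Fin m) (Fin m) ℝ)) (polyLap P) = polyLap P := by
        intro g hg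
        rw [← polyLap_aeval_matSub, hG g hg]
      obtain ⟨p, d, h0, h1, h2, h3⟩ := ih (polyLap P) hhom hinv hL
      exact ⟨p, d, h0, h1, by omega, h3⟩

/-! ### Elements close to the identity commute -/

open scoped Matrix.Norms.L2Operator in
lemma dotProduct_mulVec_pos {m : ℕ} {B : Matrix (Fin m) (Fin m) ℝ} (hB : ‖B - 1‖ < 1)
    {x : Fin m → ℝ} (hx : x ≠ 0) : 0 < x ⬝ᵥ B.mulVec x := by
  set y : EuclideanSpace ℝ (Fin m) := WithLp.toLp 2 x with hy
  have hy0 : y ≠ 0 := by simpa [hy] using hx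
  have hxx : x ⬝ᵥ x = ‖y‖ * ‖y‖ := by
    rw [← real_inner_self_eq_norm_mul_norm]
    simp only [hy, PiLp.inner_apply, dotProduct]
    rfl
  have h1 : x ⬝ᵥ (B - 1).mulVec x = inner ℝ y (Matrix.toEuclideanCLM (𝕜 := ℝ) (B - 1) y) :=
    (Matrix.inner_toEuclideanCLM (B - 1) y y).symm
  have h2 : |inner ℝ y (Matrix.toEuclideanCLM (𝕜 := ℝ) (B - 1) y)| ≤ ‖y‖ * (‖B - 1‖ * ‖y‖) :=
    (abs_real_inner_le_norm _ _).trans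
      (mul_le_mul_of_nonneg_left (ContinuousLinearMap.le_opNorm _ y) (norm_nonneg _))
  have h3 : x ⬝ᵥ B.mulVec x = x ⬝ᵥ x + x ⬝ᵥ (B - 1).mulVec x := by
    rw [Matrix.sub_mulVec, Matrix.one_mulVec, dotProduct_sub]
    ring
  have hn : 0 < ‖y‖ := norm_pos_iff.2 hy0
  have h4 := (abs_le.1 h2).1
  rw [h3, hxx, h1]
  nlinarith [mul_pos hn hn]

open scoped Matrix.Norms.L2Operator in
/-- Frobenius: if `B` is close to `1` and `A` commutes with the commutator `ABA⁻¹B⁻¹`, then `A`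
commutes with `B`. With `X = A - BAB⁻¹`, which commutes with `A` and `Aᵀ`, one has
`XB = AB - BA`, hence `tr (X B Xᵀ) = tr (Xᵀ (AB - BA)) = 0`; the quadratic form of `B` being
positive definite, `X = 0`. -/
lemma commute_of_commute_commutator {m : ℕ} (A B : Matrix.orthogonalGroup (Fin m) ℝ)
    (hB : ‖(B : Matrix (Fin m) (Fin m) ℝ) - 1‖ < 1) (h : Commute A (A * B * A⁻¹ * B⁻¹)) :
    Commute A B := by
  have h1 : Commute A (B * A * B⁻¹) := by
    have h2 : Commute A (A⁻¹ * (A * B * A⁻¹ * B⁻¹)) := ((Commute.refl A).inv_right).mul_right h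
    have h3 : (A⁻¹ * (A * B * A⁻¹ * B⁻¹))⁻¹ = B * A * B⁻¹ := by group
    rw [← h3]
    exact h2.inv_right
  have h2 : Commute A⁻¹ (B * A * B⁻¹) := h1.inv_left
  set a : Matrix (Fin m) (Fin m) ℝ := (A : Matrix (Fin m) (Fin m) ℝ) with ha
  set b : Matrix (Fin m) (Fin m) ℝ := (B : Matrix (Fin m) (Fin m) ℝ) with hb
  set a' : Matrix (Fin m) (Fin m) ℝ := ((B * A * B⁻¹ : Matrix.orthogonalGroup (Fin m) ℝ) :
    Matrix (Fin m) (Fin m) ℝ) with ha'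
  have e1 : a.transpose * a' = a' * a.transpose := congrArg Subtype.val h2
  have e2 : a.transpose * a = a * a.transpose :=
    congrArg Subtype.val ((Commute.refl A).inv_left).eq
  have e3 : a' * b = b * a := by
    have : B * A * B⁻¹ * B = B * A := by group
    exact congrArg Subtype.val this
  set X := a - a' with hX
  have e4 : a.transpose * X = X * a.transpose := by
    rw [hX, mul_sub, sub_mul, e1, e2]
  have e5 : a * X.transpose = X.transpose * a := by
    have := congrArg Matrix.transpose e4
    simpa [Matrix.transpose_mul] using this.symm
  have e6 : (X * b * X.transpose).trace = 0 := by
    rw [Matrix.trace_mul_comm]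
    have : X * b = a * b - b * a := by rw [hX, sub_mul, e3]
    rw [this, mul_sub, Matrix.trace_sub, ← mul_assoc, ← mul_assoc,
      Matrix.trace_mul_comm (X.transpose * b) a, ← mul_assoc, e5, sub_self]
  have e7 : (X * b * X.transpose).trace = ∑ i, X i ⬝ᵥ b.mulVec (X i) := by
    unfold Matrix.trace
    refine Finset.sum_congr rfl fun i _ => ?_
    rw [mul_assoc]
    rfl
  have e8 : ∀ i, X i = 0 := by
    have hnn : ∀ i ∈ Finset.univ, 0 ≤ X i ⬝ᵥ b.mulVec (X i) := by
      intro i _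
      by_cases h0 : X i = 0
      · simp [h0]
      · exact (dotProduct_mulVec_pos hB h0).le
    rw [e7, Finset.sum_eq_zero_iff_of_nonneg hnn] at e6
    intro i
    by_contra h0
    exact (dotProduct_mulVec_pos hB h0).ne' (e6 i (Finset.mem_univ i))
  have e9 : a = a' := by
    rw [← sub_eq_zero]
    exact funext e8
  refine Subtype.ext ?_
  change a * b = b * a
  rw [← e3, ← e9]

open scoped Matrix.Norms.L2Operator in
lemma norm_orthogonal_mul {m : ℕ} (g : Matrix.orthogonalGroup (Fin m) ℝ)
    (M : Matrix (Fin m) (Fin m) ℝ) : ‖(g : Matrix (Fin m) (Fin m) ℝ) * M‖ = ‖M‖ :=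
  CStarRing.norm_coe_unitary_mul g M

open scoped Matrix.Norms.L2Operator in
lemma norm_mul_orthogonal {m : ℕ} (g : Matrix.orthogonalGroup (Fin m) ℝ)
    (M : Matrix (Fin m) (Fin m) ℝ) : ‖M * (g : Matrix (Fin m) (Fin m) ℝ)‖ = ‖M‖ :=
  CStarRing.norm_mul_coe_unitary M g

open scoped Matrix.Norms.L2Operator in
lemma norm_commutator_sub_one_le_orthogonal {m : ℕ} (g h : Matrix.orthogonalGroup (Fin m) ℝ) :
    ‖((g * h * g⁻¹ * h⁻¹ : Matrix.orthogonalGroup (Fin m) ℝ) : Matrix (Fin m) (Fin m) ℝ) - 1‖ ≤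
      2 * ‖(g : Matrix (Fin m) (Fin m) ℝ) - 1‖ * ‖(h : Matrix (Fin m) (Fin m) ℝ) - 1‖ := by
  set a : Matrix (Fin m) (Fin m) ℝ := (g : Matrix (Fin m) (Fin m) ℝ) with ha
  set b : Matrix (Fin m) (Fin m) ℝ := (h : Matrix (Fin m) (Fin m) ℝ) with hb
  rw [← norm_mul_orthogonal (h * g)]
  have e : (((g * h * g⁻¹ * h⁻¹ : Matrix.orthogonalGroup (Fin m) ℝ) :
      Matrix (Fin m) (Fin m) ℝ) - 1) * ((h * g : Matrix.orthogonalGroup (Fin m) ℝ) :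
      Matrix (Fin m) (Fin m) ℝ) = (a - 1) * (b - 1) - (b - 1) * (a - 1) := by
    have h1 : g * h * g⁻¹ * h⁻¹ * (h * g) = g * h := by group
    have h2 : ((g * h * g⁻¹ * h⁻¹ : Matrix.orthogonalGroup (Fin m) ℝ) :
      Matrix (Fin m) (Fin m) ℝ) * ((h * g : Matrix.orthogonalGroup (Fin m) ℝ) :
      Matrix (Fin m) (Fin m) ℝ) = a * b := congrArg Subtype.val h1
    rw [sub_mul, h2, one_mul]
    change a * b - b * a = _
    noncomm_ring
  rw [e]
  calc ‖(a - 1) * (b - 1) - (b - 1) * (a - 1)‖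
      ≤ ‖(a - 1) * (b - 1)‖ + ‖(b - 1) * (a - 1)‖ := norm_sub_le _ _
    _ ≤ ‖a - 1‖ * ‖b - 1‖ + ‖b - 1‖ * ‖a - 1‖ := add_le_add (norm_mul_le _ _) (norm_mul_le _ _)
    _ = _ := by ring

open scoped Matrix.Norms.L2Operator in
/-- In a finite group, elements at distance less than `1/2` from `1` commute: for fixed `g`, a
non-commuting `h` closest to `1` would have `[g, h]` still closer to `1`, so commuting with `g`,
against `commute_of_commute_commutator`. -/
lemma commute_of_near_one {m : ℕ} (G : Subgroup (Matrix.orthogonalGroup (Fin m) ℝ)) [Finite G]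
    {g h : Matrix.orthogonalGroup (Fin m) ℝ} (hg : g ∈ G) (hh : h ∈ G)
    (hg1 : ‖(g : Matrix (Fin m) (Fin m) ℝ) - 1‖ < 1 / 2)
    (hh1 : ‖(h : Matrix (Fin m) (Fin m) ℝ) - 1‖ < 1 / 2) : Commute g h := by
  by_contra hc
  let S : Set (Matrix.orthogonalGroup (Fin m) ℝ) :=
    {k | k ∈ G ∧ ‖(k : Matrix (Fin m) (Fin m) ℝ) - 1‖ < 1 / 2 ∧ ¬ Commute g k}
  have hSfin : S.Finite := (Set.toFinite (G : Set (Matrix.orthogonalGroup (Fin m) ℝ))).subset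
    fun k hk => hk.1
  obtain ⟨k, ⟨hkG, hk1, hkc⟩, hmin⟩ := Set.exists_min_image S
    (fun k => ‖(k : Matrix (Fin m) (Fin m) ℝ) - 1‖) hSfin ⟨h, hh, hh1, hc⟩
  have hk0 : 0 < ‖(k : Matrix (Fin m) (Fin m) ℝ) - 1‖ := by
    rw [norm_pos_iff, sub_ne_zero]
    intro hk
    have : k = 1 := Subtype.ext hk
    exact hkc (this ▸ Commute.one_right g)
  have hlt : ‖((g * k * g⁻¹ * k⁻¹ : Matrix.orthogonalGroup (Fin m) ℝ) :
      Matrix (Fin m) (Fin m) ℝ) - 1‖ < ‖(k : Matrix (Fin m) (Fin m) ℝ) - 1‖ :=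
    (norm_commutator_sub_one_le_orthogonal g k).trans_lt (by nlinarith)
  have hcomm : Commute g (g * k * g⁻¹ * k⁻¹) := by
    by_contra hn
    exact absurd (hmin _ ⟨G.mul_mem (G.mul_mem (G.mul_mem hg hkG) (G.inv_mem hg)) (G.inv_mem hkG),
      hlt.trans hk1, hn⟩) (not_le.2 hlt)
  exact hkc (commute_of_commute_commutator g k (hk1.trans (by norm_num)) hcomm)

open scoped Matrix.Norms.L2Operator in
/-- By compactness of closed balls of matrices, a function on `G` which is constant at scale
`1/2` takes a number of values bounded in terms of the dimension only. -/
lemma exists_card_values_bound (m : ℕ) : ∃ M : ℕ,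
    ∀ (G : Subgroup (Matrix.orthogonalGroup (Fin m) ℝ))
      (f : Matrix.orthogonalGroup (Fin m) ℝ → ℝ),
      (∀ g ∈ G, ∀ h ∈ G, ‖(g : Matrix (Fin m) (Fin m) ℝ) - h‖ < 1 / 2 → f g = f h) →
      ∃ T : Finset ℝ, T.card ≤ M ∧ ∀ g ∈ G, f g ∈ T := by
  classical
  have : ProperSpace (Matrix (Fin m) (Fin m) ℝ) := FiniteDimensional.proper ℝ _
  obtain ⟨t, -, htfin, ht⟩ := (isCompact_closedBall (0 : Matrix (Fin m) (Fin m) ℝ)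
    ‖(1 : Matrix (Fin m) (Fin m) ℝ)‖).finite_cover_balls (e := 1 / 4) (by norm_num)
  refine ⟨htfin.toFinset.card, fun G f hf => ?_⟩
  let P : Matrix (Fin m) (Fin m) ℝ → Matrix.orthogonalGroup (Fin m) ℝ → Prop :=
    fun c g => g ∈ G ∧ dist (g : Matrix (Fin m) (Fin m) ℝ) c < 1 / 4
  let v : Matrix (Fin m) (Fin m) ℝ → ℝ := fun c => if h : ∃ g, P c g then f h.choose else 0
  refine ⟨htfin.toFinset.image v, Finset.card_image_le, fun g hg => ?_⟩
  have hgb : (g : Matrix (Fin m) (Fin m) ℝ) ∈ Metric.closedBall 0 ‖(1 : Matrix (Fin m) (Fin m) ℝ)‖ := by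
    rw [mem_closedBall_zero_iff, ← mul_one (g : Matrix (Fin m) (Fin m) ℝ), norm_orthogonal_mul]
  obtain ⟨c, hc, hgc⟩ := Set.mem_iUnion₂.1 (ht hgb)
  have hex : ∃ g, P c g := ⟨g, hg, hgc⟩
  refine Finset.mem_image.2 ⟨c, by simpa using hc, ?_⟩
  have hs := hex.choose_spec
  simp only [v, dif_pos hex]
  refine hf _ hs.1 g hg ?_
  rw [← dist_eq_norm]
  calc _ ≤ dist _ c + dist (g : Matrix (Fin m) (Fin m) ℝ) c := dist_triangle_right _ _ _
    _ < 1 / 4 + 1 / 4 := add_lt_add hs.2 hgc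
    _ = 1 / 2 := by norm_num

/-! ### A non-radial quadratic form invariant under an abelian group -/

lemma add_transpose_of_radial {m : ℕ} {M : Matrix (Fin m) (Fin m) ℝ} {c : ℝ}
    (h : ∀ x, x ⬝ᵥ M.mulVec x = c * (x ⬝ᵥ x)) :
    M + M.transpose = (2 * c) • (1 : Matrix (Fin m) (Fin m) ℝ) := by
  ext i j
  have h1 := h (Pi.single i 1)
  have h2 := h (Pi.single j 1)
  have h3 := h (Pi.single i 1 + Pi.single j 1)
  simp only [Matrix.mulVec_add, add_dotProduct, dotProduct_add, single_one_dotProduct,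
    Matrix.mulVec_single_one, Matrix.col_apply] at h1 h2 h3
  by_cases hij : i = j
  · subst hij
    simp at h1 ⊢
    linarith
  · simp [Ne.symm hij, hij] at h1 h2 h3 ⊢
    linarith

/-- If every element of an abelian group of orthogonal matrices has a radial quadratic form,
then the group lies in a plane `ℝ·1 + ℝ·K`. Here `K = h - hᵀ` for any `h` in the group with
`h ≠ hᵀ` (or `K = 0` if there is none): products of skew parts are scalar, and `K ≠ 0` is invertible. -/
lemma exists_plane_of_radial {m : ℕ} (A : Subgroup (Matrix.orthogonalGroup (Fin m) ℝ))
    (hcomm : ∀ a ∈ A, ∀ b ∈ A, Commute a b)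
    (hrad : ∀ a ∈ A, ∃ c : ℝ, ∀ x, x ⬝ᵥ (a : Matrix (Fin m) (Fin m) ℝ).mulVec x = c * (x ⬝ᵥ x)) :
    ∃ K : Matrix (Fin m) (Fin m) ℝ, ∀ a ∈ A, ∃ α β : ℝ,
      (a : Matrix (Fin m) (Fin m) ℝ) = α • (1 : Matrix (Fin m) (Fin m) ℝ) + β • K := by
  have hsym : ∀ a ∈ A, ∃ c : ℝ, (a : Matrix (Fin m) (Fin m) ℝ) +
      (a : Matrix (Fin m) (Fin m) ℝ).transpose = c • (1 : Matrix (Fin m) (Fin m) ℝ) := by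
    intro a ha
    obtain ⟨c, hc⟩ := hrad a ha
    exact ⟨_, add_transpose_of_radial hc⟩
  have hdec : ∀ a ∈ A, ∃ c : ℝ, (a : Matrix (Fin m) (Fin m) ℝ) =
      c • (1 : Matrix (Fin m) (Fin m) ℝ) + (1 / 2 : ℝ) • ((a : Matrix (Fin m) (Fin m) ℝ) -
        (a : Matrix (Fin m) (Fin m) ℝ).transpose) := by
    intro a ha
    obtain ⟨c, hc⟩ := hsym a ha
    refine ⟨c / 2, ?_⟩
    have : (c / 2) • (1 : Matrix (Fin m) (Fin m) ℝ) = (1 / 2 : ℝ) • (c • 1) := by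
      rw [smul_smul]; ring_nf
    rw [this, ← hc]
    module
  by_cases hK : ∃ h ∈ A, (h : Matrix (Fin m) (Fin m) ℝ) -
      (h : Matrix (Fin m) (Fin m) ℝ).transpose ≠ 0
  · obtain ⟨h, hh, hK0⟩ := hK
    set K : Matrix (Fin m) (Fin m) ℝ := (h : Matrix (Fin m) (Fin m) ℝ) -
      (h : Matrix (Fin m) (Fin m) ℝ).transpose with hKdef
    have hprod : ∀ g ∈ A, ∃ s : ℝ, K * ((g : Matrix (Fin m) (Fin m) ℝ) -
        (g : Matrix (Fin m) (Fin m) ℝ).transpose) = s • (1 : Matrix (Fin m) (Fin m) ℝ) := by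
      intro g hg
      obtain ⟨c₁, hc₁⟩ := hsym (h * g) (A.mul_mem hh hg)
      obtain ⟨c₂, hc₂⟩ := hsym (h⁻¹ * g) (A.mul_mem (A.inv_mem hh) hg)
      have e1 : (h : Matrix (Fin m) (Fin m) ℝ) * g = g * h :=
        congrArg Subtype.val (hcomm h hh g hg).eq
      have e2 : (h : Matrix (Fin m) (Fin m) ℝ) * (g : Matrix (Fin m) (Fin m) ℝ).transpose =
          (g : Matrix (Fin m) (Fin m) ℝ).transpose * h :=
        congrArg Subtype.val (hcomm h hh _ (A.inv_mem hg)).eq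
      refine ⟨c₁ - c₂, ?_⟩
      rw [sub_smul, ← hc₁, ← hc₂]
      change _ = (h : Matrix (Fin m) (Fin m) ℝ) * g + ((h : Matrix (Fin m) (Fin m) ℝ) *
        g).transpose - ((h : Matrix (Fin m) (Fin m) ℝ).transpose * g +
        ((h : Matrix (Fin m) (Fin m) ℝ).transpose * g).transpose)
      have e3 : ((h : Matrix (Fin m) (Fin m) ℝ) * g).transpose =
          (h : Matrix (Fin m) (Fin m) ℝ).transpose * (g : Matrix (Fin m) (Fin m) ℝ).transpose := by
        rw [e1, Matrix.transpose_mul]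
      have e4 : ((h : Matrix (Fin m) (Fin m) ℝ).transpose * g).transpose =
          (h : Matrix (Fin m) (Fin m) ℝ) * (g : Matrix (Fin m) (Fin m) ℝ).transpose := by
        rw [Matrix.transpose_mul, Matrix.transpose_transpose, e2]
      rw [e3, e4, hKdef]
      noncomm_ring
    obtain ⟨t, ht⟩ := hprod h hh
    rw [← hKdef] at ht
    have ht0 : t ≠ 0 := by
      rintro rfl
      have hKt : K.transpose = -K := by simp [hKdef]
      have h0 : K.conjTranspose * K = 0 := by
        rw [Matrix.conjTranspose_eq_transpose_of_trivial, hKt, neg_mul, ht, zero_smul, neg_zero]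
      exact hK0 (Matrix.conjTranspose_mul_self_eq_zero.1 h0)
    refine ⟨K, fun g hg => ?_⟩
    obtain ⟨s, hs⟩ := hprod g hg
    obtain ⟨c, hc⟩ := hdec g hg
    set L : Matrix (Fin m) (Fin m) ℝ := (g : Matrix (Fin m) (Fin m) ℝ) -
        (g : Matrix (Fin m) (Fin m) ℝ).transpose with hL
    have hLK : t • L = s • K := by
      have : K * K * L = K * (K * L) := mul_assoc _ _ _
      rw [ht, hs] at this
      simpa using this
    refine ⟨c, 1 / 2 * (t⁻¹ * s), ?_⟩
    rw [hc, ← smul_smul, ← smul_smul, ← hLK, inv_smul_smul₀ ht0]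
  · push Not at hK
    refine ⟨0, fun a ha => ?_⟩
    obtain ⟨c, hc⟩ := hdec a ha
    rw [hK a ha] at hc
    exact ⟨c, 1 / 2, hc⟩

/-- In dimension at least three a finite abelian group of orthogonal matrices preserves a
quadratic form which is not a multiple of `|x|²`. Either some `x ↦ ⟨x, a x⟩` will do, or orbits
span at most a plane and `Σ_a ⟨e₀, a x⟩²` is a nonzero degenerate form. -/
lemma exists_invariant_quadratic {n : ℕ} (hn : 2 ≤ n)
    (A : Subgroup (Matrix.orthogonalGroup (Fin (n + 1)) ℝ)) [Finite A]
    (hcomm : ∀ a ∈ A, ∀ b ∈ A, Commute a b) :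
    ∃ q : MvPolynomial (Fin (n + 1)) ℝ, q.IsHomogeneous 2 ∧
      (∀ a ∈ A, aeval (matSub (a : Matrix (Fin (n + 1)) (Fin (n + 1)) ℝ)) q = q) ∧
      ∀ c : ℝ, q ≠ C c * radSq (n + 1) := by
  by_cases hrad : ∀ a ∈ A, ∃ c : ℝ, ∀ x,
      x ⬝ᵥ (a : Matrix (Fin (n + 1)) (Fin (n + 1)) ℝ).mulVec x = c * (x ⬝ᵥ x)
  · obtain ⟨K, hK⟩ := exists_plane_of_radial A hcomm hrad
    have : Fintype A := Fintype.ofFinite A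
    have hev : ∀ x, eval x (∑ a : A, matSub (a : Matrix (Fin (n + 1)) (Fin (n + 1)) ℝ) 0 ^ 2) =
        ∑ a : A, ((a : Matrix (Fin (n + 1)) (Fin (n + 1)) ℝ).mulVec x 0) ^ 2 := by
      intro x
      simp [eval_matSub]
    refine ⟨∑ a : A, matSub (a : Matrix (Fin (n + 1)) (Fin (n + 1)) ℝ) 0 ^ 2, ?_, ?_, ?_⟩
    · exact IsHomogeneous.sum _ _ _ fun a _ => by simpa using (matSub_isHomogeneous _ 0).pow 2
    · intro b hb
      refine MvPolynomial.funext fun x => ?_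
      rw [eval_aeval_matSub, hev, hev]
      refine Fintype.sum_equiv (Equiv.mulRight (⟨b, hb⟩ : A)) _ _ fun a => ?_
      simp [Matrix.mulVec_mulVec]
    · intro c hc
      -- a nonzero vector killed by the two linear forms `x₀` and `(K x)₀`
      obtain ⟨x, hx, hx0⟩ : ∃ x : Fin (n + 1) → ℝ, (x 0 = 0 ∧ K.mulVec x 0 = 0) ∧ x ≠ 0 := by
        let F : (Fin (n + 1) → ℝ) →ₗ[ℝ] ℝ × ℝ :=
          (LinearMap.proj 0).prod ((LinearMap.proj 0).comp K.mulVecLin)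
        have hF : LinearMap.ker F ≠ ⊥ := LinearMap.ker_ne_bot_of_finrank_lt (by simp; omega)
        obtain ⟨x, hx, hx0⟩ := (Submodule.ne_bot_iff _).1 hF
        refine ⟨x, ?_, hx0⟩
        simpa [F] using hx
      have h1 := hev x
      rw [hc] at h1
      have hz : ∀ a : A, (a : Matrix (Fin (n + 1)) (Fin (n + 1)) ℝ).mulVec x 0 = 0 := by
        intro a
        obtain ⟨α, β, hab⟩ := hK a a.2
        rw [hab]
        simp [Matrix.add_mulVec, Matrix.smul_mulVec, hx.1, hx.2]
      have hxx : x ⬝ᵥ x ≠ 0 := by simpa using hx0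
      have hc0 : c = 0 := by
        simpa [hz, eval_radSq, hxx] using h1
      have h2 := hev (Pi.single 0 1)
      rw [hc, hc0] at h2
      simp only [map_zero, zero_mul] at h2
      have h3 := (Finset.sum_eq_zero_iff_of_nonneg (fun a _ => sq_nonneg _)).1 h2.symm
        (1 : A) (Finset.mem_univ _)
      simp at h3
  · push Not at hrad
    obtain ⟨h, hh, hrad⟩ := hrad
    have hev : ∀ x, eval x (∑ i, X i * matSub (h : Matrix (Fin (n + 1)) (Fin (n + 1)) ℝ) i) =
        x ⬝ᵥ (h : Matrix (Fin (n + 1)) (Fin (n + 1)) ℝ).mulVec x := by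
      intro x
      simp [eval_matSub, dotProduct]
    refine ⟨∑ i, X i * matSub (h : Matrix (Fin (n + 1)) (Fin (n + 1)) ℝ) i, ?_, ?_, ?_⟩
    · exact IsHomogeneous.sum _ _ _ fun i _ =>
        (isHomogeneous_X ℝ i).mul (matSub_isHomogeneous _ i)
    · intro b hb
      refine MvPolynomial.funext fun x => ?_
      have e : (h : Matrix (Fin (n + 1)) (Fin (n + 1)) ℝ) * b = b * h :=
        congrArg Subtype.val (hcomm h hh b hb).eq
      rw [eval_aeval_matSub, hev, hev, Matrix.mulVec_mulVec, e, ← Matrix.mulVec_mulVec,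
        dotProduct_orthogonal]
    · intro c hc
      obtain ⟨x, hx⟩ := hrad c
      apply hx
      rw [← hev, hc, map_mul, eval_C, eval_radSq]

open scoped Matrix.Norms.L2Operator in
/-- A finite group `G` has a non-radial quadratic form `q` with `q(s x) = q(x)` for all `s ∈ G`
close to `1`. -/
lemma exists_locally_invariant_quadratic {n : ℕ} (hn : 2 ≤ n)
    (G : Subgroup (Matrix.orthogonalGroup (Fin (n + 1)) ℝ)) [Finite G] :
    ∃ q : MvPolynomial (Fin (n + 1)) ℝ, q.IsHomogeneous 2 ∧
      (∀ g ∈ G, ‖(g : Matrix (Fin (n + 1)) (Fin (n + 1)) ℝ) - 1‖ < 1 / 2 →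
        aeval (matSub (g : Matrix (Fin (n + 1)) (Fin (n + 1)) ℝ)) q = q) ∧
      ∀ c : ℝ, q ≠ C c * radSq (n + 1) := by
  let S : Set (Matrix.orthogonalGroup (Fin (n + 1)) ℝ) :=
    {g | g ∈ G ∧ ‖(g : Matrix (Fin (n + 1)) (Fin (n + 1)) ℝ) - 1‖ < 1 / 2}
  have hle : Subgroup.closure S ≤ G := (Subgroup.closure_le G).2 fun g hg => hg.1
  have : Finite (Subgroup.closure S) :=
    Finite.of_injective _ (Subgroup.inclusion_injective hle)
  have hcomm : ∀ a ∈ Subgroup.closure S, ∀ b ∈ Subgroup.closure S, Commute a b := by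
    intro a ha b hb
    induction ha, hb using Subgroup.closure_induction₂ with
    | mem x y hx hy => exact commute_of_near_one G hx.1 hy.1 hx.2 hy.2
    | one_left x _ => exact Commute.one_left x
    | one_right x _ => exact Commute.one_right x
    | mul_left x y z _ _ _ h1 h2 => exact h1.mul_left h2
    | mul_right x y z _ _ _ h1 h2 => exact h1.mul_right h2
    | inv_left x y _ _ h => exact h.inv_left
    | inv_right x y _ _ h => exact h.inv_right
  obtain ⟨q, hq, hinv, hrad⟩ := exists_invariant_quadratic hn (Subgroup.closure S) hcomm
  exact ⟨q, hq, fun g hg h1 => hinv g (Subgroup.subset_closure ⟨hg, h1⟩), hrad⟩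

/-! ### The invariant form of bounded degree -/

open scoped Matrix.Norms.L2Operator in
/-- Averaging `∏_τ (q - τ|x|²)²` over `G`, where `τ` runs over a set of bounded size containing
the values of `q` on the orbit of `e₀`, gives an invariant form which vanishes at `e₀` but not identically, so it
is not a multiple of a power of `|x|²`. -/
lemma exists_invariant_not_radial (n : ℕ) (hn : 2 ≤ n) : ∃ M : ℕ,
    ∀ G : Subgroup (Matrix.orthogonalGroup (Fin (n + 1)) ℝ), Finite G →
      ∃ (P : MvPolynomial (Fin (n + 1)) ℝ) (k : ℕ), k ≤ M ∧ P.IsHomogeneous (2 * k) ∧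
        (∀ g ∈ G, aeval (matSub (g : Matrix (Fin (n + 1)) (Fin (n + 1)) ℝ)) P = P) ∧
        ¬ ∃ c : ℝ, P = C c * radSq (n + 1) ^ k := by
  obtain ⟨M, hM⟩ := exists_card_values_bound (n + 1)
  refine ⟨2 * M, fun G _ => ?_⟩
  obtain ⟨q, hq, hinv, hrad⟩ := exists_locally_invariant_quadratic hn G
  set x₀ : Fin (n + 1) → ℝ := Pi.single 0 1 with hx₀
  have hx₀1 : x₀ ⬝ᵥ x₀ = 1 := by simp [hx₀]
  obtain ⟨T, hTM, hT⟩ := hM G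
    (fun g => eval ((g : Matrix (Fin (n + 1)) (Fin (n + 1)) ℝ).mulVec x₀) q) (by
      intro g hg h hh hgh
      -- `g = s * h` with `s = g * h⁻¹` close to `1`, so `q (g x₀) = q (s (h x₀)) = q (h x₀)`
      have hs : ‖((g * h⁻¹ : Matrix.orthogonalGroup (Fin (n + 1)) ℝ) :
          Matrix (Fin (n + 1)) (Fin (n + 1)) ℝ) - 1‖ < 1 / 2 := by
        rw [← norm_mul_orthogonal h, sub_mul, one_mul]
        have e : ((g * h⁻¹ : Matrix.orthogonalGroup (Fin (n + 1)) ℝ) :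
          Matrix (Fin (n + 1)) (Fin (n + 1)) ℝ) * h = g :=
          congrArg Subtype.val (inv_mul_cancel_right g h)
        rwa [e]
      have h1 := hinv _ (G.mul_mem hg (G.inv_mem hh)) hs
      have e : ((g * h⁻¹ : Matrix.orthogonalGroup (Fin (n + 1)) ℝ) :
          Matrix (Fin (n + 1)) (Fin (n + 1)) ℝ) * h = g :=
          congrArg Subtype.val (inv_mul_cancel_right g h)
      change eval _ q = eval _ q
      conv_rhs => rw [← h1, eval_aeval_matSub, Matrix.mulVec_mulVec, e])
  set p : MvPolynomial (Fin (n + 1)) ℝ := ∏ τ ∈ T, (q - C τ * radSq (n + 1)) with hp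
  have hp0 : p ≠ 0 := Finset.prod_ne_zero_iff.2 fun τ _ => sub_ne_zero.2 (hrad τ)
  have hphom : p.IsHomogeneous (2 * T.card) := by
    have hcard : 2 * T.card = ∑ _τ ∈ T, 2 := by
      rw [Finset.sum_const, smul_eq_mul, mul_comm]
    rw [hp, hcard]
    refine IsHomogeneous.prod T _ _ fun τ _ => hq.sub ?_
    simpa using (isHomogeneous_C (Fin (n + 1)) τ).mul (radSq_isHomogeneous (n + 1))
  have : Fintype G := Fintype.ofFinite G
  set P : MvPolynomial (Fin (n + 1)) ℝ :=
    ∑ g : G, aeval (matSub (g : Matrix (Fin (n + 1)) (Fin (n + 1)) ℝ)) (p ^ 2) with hP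
  have hev : ∀ x, eval x P =
      ∑ g : G, (eval ((g : Matrix (Fin (n + 1)) (Fin (n + 1)) ℝ).mulVec x) p) ^ 2 := by
    intro x
    rw [hP, map_sum]
    exact Finset.sum_congr rfl fun g _ => by rw [eval_aeval_matSub, map_pow]
  refine ⟨P, 2 * T.card, by omega, ?_, ?_, ?_⟩
  · refine IsHomogeneous.sum _ _ _ fun g _ => aeval_matSub_isHomogeneous _ ?_
    have := hphom.pow 2
    rwa [mul_comm] at this
  · intro b hb
    refine MvPolynomial.funext fun x => ?_
    rw [eval_aeval_matSub, hev, hev]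
    refine Fintype.sum_equiv (Equiv.mulRight (⟨b, hb⟩ : G)) _ _ fun a => ?_
    simp [Matrix.mulVec_mulVec]
  · rintro ⟨c, hc⟩
    have hz : eval x₀ P = 0 := by
      rw [hev]
      refine Finset.sum_eq_zero fun g _ => ?_
      rw [sq_eq_zero_iff, hp, map_prod]
      refine Finset.prod_eq_zero (hT g g.2) ?_
      simp [eval_radSq, dotProduct_orthogonal, hx₀1]
    have hc0 : c = 0 := by
      rw [hc] at hz
      simpa [eval_radSq, hx₀1] using hz
    apply hp0
    refine MvPolynomial.funext fun x => ?_
    have h1 := hev x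
    rw [hc, hc0, C_0, zero_mul, map_zero] at h1
    have h2 := (Finset.sum_eq_zero_iff_of_nonneg (fun a _ => sq_nonneg _)).1 h1.symm
        (1 : G) (Finset.mem_univ _)
    simpa using h2

/-- For every `n ≥ 2` there is a positive integer `D`, depending only on `n`, such that for
every finite subgroup `G` of `O(n+1)` there is a nonzero `G`-invariant harmonic polynomial on
`ℝ^{n+1}` homogeneous of degree `d` with `1 ≤ d ≤ D`: the first nonzero eigenvalue of the
scalar Laplacian on any spherical orbifold `Sⁿ/G` (with or without fixed points) is bounded
above by a constant depending only on `n`. -/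
theorem sphere_quotient_eigenvalue_bound (n : ℕ) (hn : 2 ≤ n) :
    ∃ D : ℕ, 0 < D ∧
      ∀ G : Subgroup (Matrix.orthogonalGroup (Fin (n + 1)) ℝ), Finite G →
        ∃ (p : MvPolynomial (Fin (n + 1)) ℝ) (d : ℕ), p ≠ 0 ∧ 1 ≤ d ∧ d ≤ D ∧
          p.IsHomogeneous d ∧ IsHarmonic p ∧
          ∀ g ∈ G, aeval (matSub (g : Matrix (Fin (n + 1)) (Fin (n + 1)) ℝ)) p = p := by
  obtain ⟨M, hM⟩ := exists_invariant_not_radial n hn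
  refine ⟨2 * M + 1, by omega, fun G hG => ?_⟩
  obtain ⟨P, k, hk, hhom, hinv, hrad⟩ := hM G hG
  obtain ⟨p, d, h0, h1, h2, h3⟩ :=
    exists_harmonic_of_not_radial (Nat.succ_pos n) G k P hhom hinv hrad
  exact ⟨p, d, h0, h1, by omega, h3⟩
end

section
/- For all positive integers a_0 ≥ a_1 ≥ a_2 ≥ a_3 with 1/a_0 + 1/a_1 + 1/a_2 + 1/a_3 > 1, one has a_0·(1/a_0 + 1/a_1 + 1/a_2 + 1/a_3 − 1) ≥ 1/66, with equality if and only if (a_0, a_1, a_2, a_3) = (13, 11, 3, 2). -/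
/-!
Write `a, b, c, d` for `a₀, a₁, a₂, a₃`. Multiplying by `b c d` turns the quantity of interest into
`F = G / (b c d)` with `G = b c d + a (c d + b d + b c) - a b c d` an integer (`clearedNumerator`),
and the hypothesis says `G > 0`. If `1/b + 1/c + 1/d ≥ 1` then `F ≥ 1`; this covers `d = 1` and
`c = d = 2`. Otherwise the monotonicity of the exponents leaves only finitely many `(b, c, d)`:
comparing `1 < 1/a + 1/b + 1/c + 1/d` with the largest possible values of the reciprocals gives
`d ≤ 3`, then a bound on `c`, then one on `b` (`mem_cases`). For each such triple `F` is affine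
in `a`, with values in the multiples of `1 / lcm(b, c, d)`, and its positivity alone gives the
bound. The worst denominator is `66`, for `(b, c, d) = (11, 3, 2)`, where `66 F = 66 - 5 a` takes
the value `1` exactly at `a = 13`.
-/

/-- The integer `b c d · F(a, b, c, d)`. -/
def clearedNumerator (a b c d : ℤ) : ℤ :=
  b * c * d + a * (c * d + b * d + b * c) - a * b * c * d

lemma one_div_natCast_anti {m n : ℕ} (hm : 0 < m) (h : m ≤ n) : (1 : ℚ) / n ≤ 1 / m :=
  one_div_le_one_div_of_le (by exact_mod_cast hm) (by exact_mod_cast h)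

/-- The possible `(b, c, d)`: two infinite families and finitely many further ranges. -/
lemma mem_cases (a b c d : ℕ) (hd : 0 < d) (hdc : d ≤ c) (hcb : c ≤ b) (hba : b ≤ a)
    (hsum : 1 < (1 : ℚ) / a + 1 / b + 1 / c + 1 / d) :
    d = 1 ∨ (d = 2 ∧ c = 2) ∨ (d = 2 ∧ c = 3 ∧ b ≤ 11) ∨ (d = 2 ∧ c = 4 ∧ b ≤ 7) ∨
      (d = 2 ∧ c = 5 ∧ b ≤ 6) ∨ (d = 3 ∧ c = 3 ∧ b ≤ 5) ∨ (d = 3 ∧ c = 4 ∧ b ≤ 4) := by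
  have hab := one_div_natCast_anti (by omega) hba
  have hbc := one_div_natCast_anti (by omega) hcb
  have hcd := one_div_natCast_anti hd hdc
  have hd3 : d ≤ 3 := by
    by_contra h
    have := one_div_natCast_anti (m := 4) (n := d) (by norm_num) (by omega)
    norm_num at *
    linarith
  -- Once `d` (or `d` and `c`) is fixed, the next exponent is bounded by the same comparison.
  have hc : ∀ k : ℕ, 0 < k → (3 : ℚ) * (1 / k) + 1 / d ≤ 1 → c < k := by
    intro k hk hle
    by_contra h
    have := one_div_natCast_anti (n := c) hk (by omega)
    linarith
  have hb : ∀ k : ℕ, 0 < k → (2 : ℚ) * (1 / k) + 1 / c + 1 / d ≤ 1 → b < k := by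
    intro k hk hle
    by_contra h
    have := one_div_natCast_anti (n := b) hk (by omega)
    linarith
  clear hsum hab hbc hcd
  interval_cases d
  · simp
  · have := hc 6 (by norm_num) (by norm_num)
    interval_cases c
    · simp
    · have := hb 12 (by norm_num) (by norm_num)
      omega
    · have := hb 8 (by norm_num) (by norm_num)
      omega
    · have := hb 7 (by norm_num) (by norm_num)
      omega
  · have := hc 5 (by norm_num) (by norm_num)
    interval_cases c
    · have := hb 6 (by norm_num) (by norm_num)
      omega
    · have := hb 5 (by norm_num) (by norm_num)
      omega

/-- The theorem after clearing denominators. -/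
lemma clearedNumerator_bound (a b c d : ℕ) (hd : 0 < d) (hdc : d ≤ c) (hcb : c ≤ b) (hba : b ≤ a)
    (hsum : 1 < (1 : ℚ) / a + 1 / b + 1 / c + 1 / d) (hG : 0 < clearedNumerator a b c d) :
    (b * c * d : ℤ) ≤ 66 * clearedNumerator a b c d ∧
      (66 * clearedNumerator a b c d = b * c * d ↔ a = 13 ∧ b = 11 ∧ c = 3 ∧ d = 2) := by
  unfold clearedNumerator at *
  rcases mem_cases a b c d hd hdc hcb hba hsum with
    rfl | ⟨rfl, rfl⟩ | ⟨rfl, rfl, h⟩ | ⟨rfl, rfl, h⟩ | ⟨rfl, rfl, h⟩ | ⟨rfl, rfl, h⟩ |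
      ⟨rfl, rfl, h⟩
  · have h1 : (0 : ℤ) < b * c := by
      have : 0 < b * c := Nat.mul_pos (by omega) (by omega)
      exact_mod_cast this
    have h2 : (0 : ℤ) ≤ a * c := by positivity
    have h3 : (0 : ℤ) ≤ a * b := by positivity
    push_cast
    refine ⟨by linarith, fun h => by linarith, fun h => absurd h.2.2.2 (by norm_num)⟩
  · push_cast
    refine ⟨by linarith, fun h => ?_, fun h => absurd h.2.2.1 (by norm_num)⟩
    have : (0 : ℤ) < b := by omega
    linarith
  all_goals
    interval_cases b <;> push_cast at hG ⊢ <;>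
      refine ⟨by omega, fun h => ?_, fun h => ?_⟩ <;>
      first | omega | (norm_num at h; done) | (norm_num; omega)

/-- For all positive integers `a₀ ≥ a₁ ≥ a₂ ≥ a₃` with `1/a₀ + 1/a₁ + 1/a₂ + 1/a₃ > 1`,
one has `a₀·(1/a₀ + 1/a₁ + 1/a₂ + 1/a₃ − 1) ≥ 1/66`, with equality if and only if
`(a₀, a₁, a₂, a₃) = (13, 11, 3, 2)`. -/
theorem brieskorn_pham_dim3_bound (a₀ a₁ a₂ a₃ : ℕ)
    (h₃ : 0 < a₃) (h₃₂ : a₃ ≤ a₂) (h₂₁ : a₂ ≤ a₁) (h₁₀ : a₁ ≤ a₀)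
    (hsum : 1 < (1 : ℚ) / a₀ + 1 / a₁ + 1 / a₂ + 1 / a₃) :
    (1 : ℚ) / 66 ≤ (a₀ : ℚ) * ((1 : ℚ) / a₀ + 1 / a₁ + 1 / a₂ + 1 / a₃ - 1) ∧
    ((a₀ : ℚ) * ((1 : ℚ) / a₀ + 1 / a₁ + 1 / a₂ + 1 / a₃ - 1) = 1 / 66 ↔
      (a₀, a₁, a₂, a₃) = (13, 11, 3, 2)) := by
  have p₀ : (0 : ℚ) < a₀ := by exact_mod_cast (by omega : 0 < a₀)
  have p₁ : (0 : ℚ) < a₁ := by exact_mod_cast (by omega : 0 < a₁)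
  have p₂ : (0 : ℚ) < a₂ := by exact_mod_cast (by omega : 0 < a₂)
  have p₃ : (0 : ℚ) < a₃ := by exact_mod_cast h₃
  have hN : (0 : ℚ) < a₁ * a₂ * a₃ := by positivity
  have hF : (a₀ : ℚ) * ((1 : ℚ) / a₀ + 1 / a₁ + 1 / a₂ + 1 / a₃ - 1) =
      (clearedNumerator a₀ a₁ a₂ a₃ : ℚ) / (a₁ * a₂ * a₃) := by
    unfold clearedNumerator
    push_cast
    field_simp
    ring
  have hG : 0 < clearedNumerator a₀ a₁ a₂ a₃ := by
    have h : (0 : ℚ) < (clearedNumerator a₀ a₁ a₂ a₃ : ℚ) / (a₁ * a₂ * a₃) := by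
      rw [← hF]
      exact mul_pos p₀ (by linarith)
    exact_mod_cast (div_pos_iff_of_pos_right hN).1 h
  obtain ⟨hle, heq⟩ := clearedNumerator_bound a₀ a₁ a₂ a₃ h₃ h₃₂ h₂₁ h₁₀ hsum hG
  rw [hF]
  constructor
  · rw [div_le_div_iff₀ (by norm_num) hN]
    have : ((a₁ * a₂ * a₃ : ℤ) : ℚ) ≤ (66 * clearedNumerator a₀ a₁ a₂ a₃ : ℤ) := by
      exact_mod_cast hle
    push_cast at this
    linarith
  · simp only [Prod.mk.injEq]
    rw [← heq, div_eq_div_iff hN.ne' (by norm_num), ← @Int.cast_inj ℚ]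
    push_cast
    rw [one_mul, mul_comm]
end

section
/- For all positive integers a_0 ≥ a_1 ≥ a_2 ≥ a_3 ≥ a_4 with Σ_{i=0}^4 1/a_i > 1, one has a_0·(Σ_{i=0}^4 1/a_i − 1) ≥ 1/3486, with equality if and only if (a_0, a_1, a_2, a_3, a_4) = (85, 83, 7, 3, 2). -/
/-!
Put `D = a₂a₃a₄` and `n = D − a₃a₄ − a₂a₄ − a₂a₃`, so that `1/a₂ + 1/a₃ + 1/a₄ = 1 − n/D`. Clearing
denominators, `F = K / (D a₁)` with the integer `K = D a₁ − a₀ (n a₁ − D)`, and the hypothesis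
`Σ 1/aᵢ > 1` says `K ≥ 1`.

If `n a₁ ≤ D`, then `K ≥ D a₁`, i.e. `F ≥ 1`. Otherwise `a₁ ≤ a₀` and `K > 0` give `n a₁ < 2D`, and
`a₂ ≤ a₁` then leaves only finitely many triples `(a₂, a₃, a₄)` (`small_triple`). For all of them
except `(7, 3, 2)` one has `2D² ≤ 3486 n`, hence `D a₁ < 2D²/n ≤ 3486 ≤ 3486 K`. For `(7, 3, 2)`,
where `D = 42` and `n = 1`, the inequality `a₁ < 84` gives `D a₁ ≤ 42 · 83 = 3486`, with equality in
`D a₁ ≤ 3486 K` only for `a₁ = 83` and `K = 1`, which forces `a₀ = 85`.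
-/

/-- The finite search: a triple `x ≥ y ≥ z` with `0 < n < 2yz`, where `n/(xyz)` is the defect
`1 − 1/x − 1/y − 1/z`, is `(7, 3, 2)` or has a defect that is large compared with `1/(xyz)`. -/
lemma small_triple (x y z : ℤ) (hz : 0 < z) (hzy : z ≤ y) (hyx : y ≤ x)
    (hpos : 0 < x * y * z - y * z - x * z - x * y)
    (hlt : x * y * z - y * z - x * z - x * y < 2 * (y * z)) :
    (x = 7 ∧ y = 3 ∧ z = 2) ∨
      2 * (x * y * z) ^ 2 ≤ 3486 * (x * y * z - y * z - x * z - x * y) := by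
  have hy : 0 < y := by linarith
  have hx : 0 < x := by linarith
  have hy4 : y * z < 4 * z + y := by
    have : y * z ≤ x * z := mul_le_mul_of_nonneg_right hyx hz.le
    refine lt_of_mul_lt_mul_left (a := x) ?_ hx.le
    linarith
  have hz5 : z < 5 := by
    refine lt_of_mul_lt_mul_left (a := y) ?_ hy.le
    linarith
  have hy8 : y < 8 := by
    interval_cases z <;> omega
  have hx18 : x < 18 := by
    interval_cases z <;> interval_cases y <;> omega
  interval_cases z <;> interval_cases y <;> first | omega | (interval_cases x <;> omega)

/-- The theorem after clearing denominators: `D a₁ ≤ 3486 K`, with the equality case. -/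
lemma cleared_bound (a b x y z : ℤ) (hz : 0 < z) (hzy : z ≤ y) (hyx : y ≤ x) (hxb : x ≤ b)
    (hba : b ≤ a)
    (hK : 0 < x * y * z * b - a * ((x * y * z - y * z - x * z - x * y) * b - x * y * z)) :
    x * y * z * b <
        3486 * (x * y * z * b - a * ((x * y * z - y * z - x * z - x * y) * b - x * y * z)) ∨
      (a = 85 ∧ b = 83 ∧ x = 7 ∧ y = 3 ∧ z = 2) := by
  have hy : 0 < y := by linarith
  have hx : 0 < x := by linarith
  have hb : 0 < b := by linarith
  have hD : 0 < x * y * z := by positivity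
  have key := small_triple x y z hz hzy hyx
  have hDx : x * (2 * (y * z)) = 2 * (x * y * z) := by ring
  generalize hn : x * y * z - y * z - x * z - x * y = n at *
  rcases le_or_gt (n * b) (x * y * z) with h | h
  · left
    have h1 : a * (n * b - x * y * z) ≤ 0 :=
      mul_nonpos_of_nonneg_of_nonpos (by linarith) (by linarith)
    have h2 : 0 < x * y * z * b := by positivity
    linarith
  · have hn0 : 0 < n := pos_of_mul_pos_left (hD.trans h) hb.le
    have hnb : n * b < 2 * (x * y * z) := by
      have h1 : b * (n * b - x * y * z) ≤ a * (n * b - x * y * z) :=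
        mul_le_mul_of_nonneg_right hba (by linarith)
      refine lt_of_mul_lt_mul_left (a := b) ?_ hb.le
      linarith
    have hlt : n < 2 * (y * z) := by
      have h1 : n * x ≤ n * b := mul_le_mul_of_nonneg_left hxb hn0.le
      refine lt_of_mul_lt_mul_left (a := x) ?_ hx.le
      linarith
    rcases key hn0 hlt with ⟨rfl, rfl, rfl⟩ | hbig
    · obtain rfl : n = 1 := by omega
      have hb84 : b < 84 := by omega
      by_cases hb83 : b = 83
      · subst hb83; omega
      · left; omega
    · left
      have h1 : x * y * z * b < 3486 := by
        refine lt_of_mul_lt_mul_left (a := n) ?_ hn0.le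
        have := mul_lt_mul_of_pos_left hnb hD
        linarith
      linarith

/-- For all positive integers `a₀ ≥ a₁ ≥ a₂ ≥ a₃ ≥ a₄` with `Σ 1/aᵢ > 1`, one has
`a₀·(Σ 1/aᵢ − 1) ≥ 1/3486`, with equality if and only if
`(a₀, a₁, a₂, a₃, a₄) = (85, 83, 7, 3, 2)`. -/
theorem brieskorn_pham_dim4_bound (a₀ a₁ a₂ a₃ a₄ : ℕ)
    (h₄ : 0 < a₄) (h₄₃ : a₄ ≤ a₃) (h₃₂ : a₃ ≤ a₂) (h₂₁ : a₂ ≤ a₁) (h₁₀ : a₁ ≤ a₀)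
    (hsum : 1 < (1 : ℚ) / a₀ + 1 / a₁ + 1 / a₂ + 1 / a₃ + 1 / a₄) :
    (1 : ℚ) / 3486 ≤
      (a₀ : ℚ) * ((1 : ℚ) / a₀ + 1 / a₁ + 1 / a₂ + 1 / a₃ + 1 / a₄ - 1) ∧
    ((a₀ : ℚ) * ((1 : ℚ) / a₀ + 1 / a₁ + 1 / a₂ + 1 / a₃ + 1 / a₄ - 1) = 1 / 3486 ↔
      (a₀, a₁, a₂, a₃, a₄) = (85, 83, 7, 3, 2)) := by
  have p4 : (0 : ℚ) < a₄ := by exact_mod_cast h₄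
  have p3 : (0 : ℚ) < a₃ := by exact_mod_cast (by omega : 0 < a₃)
  have p2 : (0 : ℚ) < a₂ := by exact_mod_cast (by omega : 0 < a₂)
  have p1 : (0 : ℚ) < a₁ := by exact_mod_cast (by omega : 0 < a₁)
  have p0 : (0 : ℚ) < a₀ := by exact_mod_cast (by omega : 0 < a₀)
  have hF : (a₀ : ℚ) * ((1 : ℚ) / a₀ + 1 / a₁ + 1 / a₂ + 1 / a₃ + 1 / a₄ - 1) =
      ((a₂ * a₃ * a₄ * a₁ - a₀ * ((a₂ * a₃ * a₄ - a₃ * a₄ - a₂ * a₄ - a₂ * a₃) * a₁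
        - a₂ * a₃ * a₄) : ℤ) : ℚ) / ((a₂ * a₃ * a₄ * a₁ : ℤ) : ℚ) := by
    push_cast
    field_simp
    ring
  have hden : (0 : ℚ) < ((a₂ * a₃ * a₄ * a₁ : ℤ) : ℚ) := by
    push_cast
    positivity
  have hFpos : 0 < (a₀ : ℚ) * ((1 : ℚ) / a₀ + 1 / a₁ + 1 / a₂ + 1 / a₃ + 1 / a₄ - 1) :=
    mul_pos p0 (by linarith)
  rw [hF] at hFpos
  have hK := (div_pos_iff_of_pos_right hden).1 hFpos
  rw [Int.cast_pos] at hK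
  rcases cleared_bound a₀ a₁ a₂ a₃ a₄ (by omega) (by omega) (by omega) (by omega) (by omega) hK
    with h | ⟨h0, h1, h2, h3, h4⟩
  · have hlt : (1 : ℚ) / 3486 <
        (a₀ : ℚ) * ((1 : ℚ) / a₀ + 1 / a₁ + 1 / a₂ + 1 / a₃ + 1 / a₄ - 1) := by
      rw [hF, div_lt_div_iff₀ (by norm_num) hden]
      rw [← Int.cast_lt (R := ℚ)] at h
      rw [Int.cast_mul 3486] at h
      push_cast at h ⊢
      linarith
    refine ⟨hlt.le, fun he => absurd he hlt.ne', fun he => ?_⟩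
    simp only [Prod.mk.injEq] at he
    obtain ⟨rfl, rfl, rfl, rfl, rfl⟩ := he
    norm_num at h
  · obtain rfl : a₀ = 85 := by omega
    obtain rfl : a₁ = 83 := by omega
    obtain rfl : a₂ = 7 := by omega
    obtain rfl : a₃ = 3 := by omega
    obtain rfl : a₄ = 2 := by omega
    norm_num
end

section
/- Define the Sylvester sequence by s_1 = 2 and s_{k+1} = s_k² − s_k + 1. Then for every n ≥ 2 and all positive integers a_0 ≥ a_1 ≥ ... ≥ a_n with Σ_{i=0}^n 1/a_i > 1, one has a_0·(Σ_{i=0}^n 1/a_i − 1) ≥ 1/((s_n − 1)(2s_n − 3)), and this bound is attained by the tuple given by a_i = s_{n+1−i} for 2 ≤ i ≤ n, a_1 = 2s_n − 3, a_0 = 2s_n − 1. -/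
/-!
Reverse the tuple to `x 0 ≤ x 1 ≤ ⋯ ≤ x n = a₀` and let `r k = 1 - ∑_{i<k} 1/x i`. Then
`F = 1 - x n * r n`. If `r n ≤ 0` then `F ≥ 1`. Otherwise `F` is a positive rational whose
denominator divides `P = ∏_{i<n} x i`, so `F ≥ 1/P`, and it remains to show
`P ≤ (s_n - 1)(2 s_n - 3)` (`prod_le_bound`) from `0 < r n < 1/x n`.

Write `A k = s_{k+1} - 1`, so that `A (k+1) = A k (A k + 1)` and
`∑_{i<k} 1/s_{i+1} = 1 - 1/A k`. The main tool is a log-majorization estimate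
(`prod_le_exp`): if `r j ≥ 1/A j` for all `j ≤ k`, then
`∏_{i≤k} x i ≤ A (k+1) exp ((r (k+1) - 1/A (k+1)) x k)`; it comes from `z ≤ exp (z - 1)` and
summation by parts. Together with the integrality of `r k ∏_{i<k} x i` it first yields the
theorem of Curtiss: `r k ≥ 1/A k` whenever `r k > 0` (`curtiss`).

For the bound on `P`, put `n = m + 1`. If `r m * x (m-1) ≤ 1/2`, the estimate at `m`, together
with the integrality of `r m ∏_{i<m} x i` and `x m * r m < 2`, gives the sharp bound. Otherwise
take the largest `k < m` with `k = 0` or `r k * x (k-1) ≤ c`, where `c = n - k`. The remaining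
`x i` with `k ≤ i < n` are then so balanced that their product is at most `(3c / (2 r k))^c`, and
the estimate at `k` gives `P ≤ (3c/2)^c A(k)^(c+1)`. For `n ≥ 4` this is below the desired bound
because `A` grows doubly exponentially (`numeric_bound`); `n = 2, 3` are finite checks.
-/

open Finset

/-- `A k = s_{k+1} - 1 = s_1 ⋯ s_k`, for the Sylvester sequence `s`. -/
noncomputable def sylvPred : ℕ → ℝ
  | 0 => 1
  | k + 1 => sylvPred k * (sylvPred k + 1)

/-- The remainder `1 - ∑_{i<k} 1/x i`. -/
noncomputable def remainder (x : ℕ → ℕ) (k : ℕ) : ℝ := 1 - ∑ i ∈ range k, 1 / (x i : ℝ)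

lemma sylvPred_succ (k : ℕ) : sylvPred (k + 1) = sylvPred k * (sylvPred k + 1) := rfl

lemma one_le_sylvPred (k : ℕ) : 1 ≤ sylvPred k := by
  induction k with
  | zero => simp [sylvPred]
  | succ k ih => rw [sylvPred_succ]; nlinarith

lemma sylvPred_mono : Monotone sylvPred := by
  refine monotone_nat_of_le_succ fun k => ?_
  rw [sylvPred_succ]
  nlinarith [one_le_sylvPred k]

lemma one_div_sylvPred_succ (k : ℕ) :
    1 / sylvPred (k + 1) = 1 / sylvPred k - 1 / (sylvPred k + 1) := by
  have := one_le_sylvPred k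
  rw [sylvPred_succ]
  field_simp
  ring

lemma remainder_succ (x : ℕ → ℕ) (k : ℕ) :
    remainder x (k + 1) = remainder x k - 1 / (x k : ℝ) := by
  simp only [remainder, sum_range_succ]
  ring

lemma remainder_anti (x : ℕ → ℕ) : Antitone (remainder x) := by
  refine antitone_nat_of_succ_le fun k => ?_
  rw [remainder_succ]
  have : 0 ≤ 1 / (x k : ℝ) := by positivity
  linarith

lemma le_mul_exp {t B : ℝ} (hB : 0 < B) : t ≤ B * Real.exp (t / B - 1) := by
  have h := Real.add_one_le_exp (t / B - 1)
  calc t = B * (t / B - 1 + 1) := by field_simp; ring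
    _ ≤ _ := by gcongr

/-- Log-majorization estimate: as long as the partial sums of `1/x i` do not exceed the Sylvester
ones, the product of the `x i` is bounded by the Sylvester product up to an explicit factor. -/
lemma prod_le_exp (x : ℕ → ℕ) (hx : ∀ i, 0 < x i) (hm : Monotone x) (k : ℕ)
    (hD : ∀ j ≤ k, 1 / sylvPred j ≤ remainder x j) :
    (∏ i ∈ range (k + 1), (x i : ℝ)) ≤ sylvPred (k + 1) *
      Real.exp ((remainder x (k + 1) - 1 / sylvPred (k + 1)) * x k) := by
  induction k with
  | zero =>
    have h0 : (0 : ℝ) < x 0 := by exact_mod_cast hx 0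
    have h := le_mul_exp (t := (x 0 : ℝ)) (B := 2) (by norm_num)
    have e : (remainder x (0 + 1) - 1 / sylvPred (0 + 1)) * x 0 = (x 0 : ℝ) / 2 - 1 := by
      simp only [remainder, sylvPred, zero_add, sum_range_one]
      field_simp
      ring
    rw [e]
    simp only [zero_add, prod_range_one, sylvPred]
    linarith
  | succ k ih =>
    have ih := ih fun j hj => hD j (by omega)
    have hA := one_le_sylvPred (k + 1)
    have h0 : (0 : ℝ) < x (k + 1) := by exact_mod_cast hx (k + 1)
    have hle : (x k : ℝ) ≤ x (k + 1) := by exact_mod_cast hm (Nat.le_succ k)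
    have hD' := sub_nonneg.2 (hD (k + 1) le_rfl)
    have h := le_mul_exp (t := (x (k + 1) : ℝ)) (B := sylvPred (k + 1) + 1) (by linarith)
    have e : (remainder x (k + 1 + 1) - 1 / sylvPred (k + 1 + 1)) * x (k + 1) =
        (remainder x (k + 1) - 1 / sylvPred (k + 1)) * x (k + 1) +
          ((x (k + 1) : ℝ) / (sylvPred (k + 1) + 1) - 1) := by
      rw [one_div_sylvPred_succ (k + 1), remainder_succ x (k + 1)]
      field_simp
      ring
    rw [prod_range_succ, e, Real.exp_add]
    calc _ ≤ (sylvPred (k + 1) *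
          Real.exp ((remainder x (k + 1) - 1 / sylvPred (k + 1)) * x (k + 1))) *
          ((sylvPred (k + 1) + 1) *
            Real.exp ((x (k + 1) : ℝ) / (sylvPred (k + 1) + 1) - 1)) := by
          gcongr
          exact ih.trans (by gcongr)
      _ = _ := by rw [sylvPred_succ (k + 1)]; ring

lemma exists_int (x : ℕ → ℕ) (hx : ∀ i, 0 < x i) (k : ℕ) :
    ∃ p : ℤ, remainder x k * ∏ i ∈ range k, (x i : ℝ) = p := by
  induction k with
  | zero => exact ⟨1, by simp [remainder]⟩
  | succ k ih =>
    obtain ⟨p, hp⟩ := ih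
    refine ⟨p * x k - ∏ i ∈ range k, (x i : ℤ), ?_⟩
    have h0 : (0 : ℝ) < x k := by exact_mod_cast hx k
    rw [remainder_succ, prod_range_succ]
    push_cast
    rw [← hp]
    field_simp

lemma prod_cast_pos (x : ℕ → ℕ) (hx : ∀ i, 0 < x i) (k : ℕ) :
    0 < ∏ i ∈ range k, (x i : ℝ) :=
  prod_pos fun i _ => by exact_mod_cast hx i

lemma one_le_remainder_mul_prod (x : ℕ → ℕ) (hx : ∀ i, 0 < x i) (k : ℕ)
    (hr : 0 < remainder x k) : 1 ≤ remainder x k * ∏ i ∈ range k, (x i : ℝ) := by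
  obtain ⟨p, hp⟩ := exists_int x hx k
  have h := mul_pos hr (prod_cast_pos x hx k)
  rw [hp] at h ⊢
  have : 0 < p := by exact_mod_cast h
  exact_mod_cast this

/-- The theorem of Curtiss: among the sums of `k` unit fractions below `1`, the Sylvester sum is the
largest. -/
lemma curtiss (x : ℕ → ℕ) (hx : ∀ i, 0 < x i) (hm : Monotone x) (k : ℕ)
    (hr : 0 < remainder x k) : 1 / sylvPred k ≤ remainder x k := by
  induction k using Nat.strong_induction_on with
  | _ k ih =>
    rcases k with _ | k
    · simp [remainder, sylvPred]
    · by_contra! hlt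
      have h0 : (0 : ℝ) < x k := by exact_mod_cast hx k
      have hA := one_le_sylvPred (k + 1)
      have h := prod_le_exp x hx hm k fun j hj =>
        ih j (by omega) (hr.trans_le (remainder_anti x (by omega)))
      have h1 : Real.exp ((remainder x (k + 1) - 1 / sylvPred (k + 1)) * x k) ≤ 1 :=
        Real.exp_le_one_iff.2 (mul_nonpos_of_nonpos_of_nonneg (by linarith) h0.le)
      have h2 := one_le_remainder_mul_prod x hx (k + 1) hr
      have h3 : (∏ i ∈ range (k + 1), (x i : ℝ)) ≤ sylvPred (k + 1) := by nlinarith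
      have h4 : remainder x (k + 1) * sylvPred (k + 1) < 1 := (lt_div_iff₀ (by linarith)).1 hlt
      nlinarith

/-- The case where the last remainder is small: here the bound is sharp. -/
lemma prod_le_of_small (x : ℕ → ℕ) (hx : ∀ i, 0 < x i) (hm : Monotone x) (l : ℕ)
    (hr : 0 < remainder x (l + 1)) (hsmall : remainder x (l + 1) * x l ≤ 1 / 2)
    (hlt : remainder x (l + 1) * x (l + 1) < 2) :
    (∏ i ∈ range (l + 2), (x i : ℝ)) ≤
      sylvPred (l + 1) * (2 * sylvPred (l + 1) - 1) := by
  have hA := one_le_sylvPred (l + 1)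
  have hQ := prod_le_exp x hx hm l fun j hj =>
    curtiss x hx hm j (hr.trans_le (remainder_anti x (by omega)))
  have hC := curtiss x hx hm (l + 1) hr
  obtain ⟨p, hp⟩ := exists_int x hx (l + 1)
  have hQ0 := prod_cast_pos x hx (l + 1)
  have hNat : (∏ i ∈ range (l + 1), (x i : ℝ)) = ((∏ i ∈ range (l + 1), (x i : ℤ) : ℤ) : ℝ) := by
    push_cast; rfl
  rw [prod_range_succ]
  -- With `Q = ∏_{i≤l} x i`, the integer `p = r (l+1) * Q` satisfies `x (l+1) * p < 2 Q`, hence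
  -- `x (l+1) * p ≤ 2 Q - 1`.
  have hint : (x (l + 1) : ℝ) * (remainder x (l + 1) * ∏ i ∈ range (l + 1), (x i : ℝ)) ≤
      2 * (∏ i ∈ range (l + 1), (x i : ℝ)) - 1 := by
    have h1 : (x (l + 1) : ℝ) * (remainder x (l + 1) * ∏ i ∈ range (l + 1), (x i : ℝ)) <
        2 * ∏ i ∈ range (l + 1), (x i : ℝ) := by nlinarith
    rw [hp, hNat] at h1 ⊢
    have h2 : (x (l + 1) : ℤ) * p < 2 * ∏ i ∈ range (l + 1), (x i : ℤ) := by exact_mod_cast h1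
    have h3 : (x (l + 1) : ℤ) * p ≤ 2 * (∏ i ∈ range (l + 1), (x i : ℤ)) - 1 := by omega
    exact_mod_cast h3
  clear hNat hp
  generalize (∏ i ∈ range (l + 1), (x i : ℝ)) = Q at *
  generalize remainder x (l + 1) = e at *
  generalize sylvPred (l + 1) = A at *
  generalize (x (l + 1) : ℝ) = z at *
  have heA : 1 ≤ e * A := (div_le_iff₀ (by linarith)).1 hC
  obtain ⟨v, hv⟩ : ∃ v, v = 1 / (e * A) := ⟨_, rfl⟩
  have hv0 : 0 < v := by rw [hv]; positivity
  have hv1 : v ≤ 1 := by rw [hv]; exact div_le_one_of_le₀ heA (by positivity)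
  have hve : v * e * A = 1 := by rw [hv]; field_simp
  have hexp : (e - 1 / A) * x l ≤ (1 - v) / 2 := by
    have : e - 1 / A = (1 - v) * e := by
      rw [hv]; field_simp
    rw [this]
    nlinarith
  have hE : Real.exp ((1 - v) / 2) ≤ 2 / (1 + v) := by
    have h := Real.add_one_le_exp (-((1 - v) / 2))
    rw [Real.exp_neg] at h
    have h2 := Real.exp_pos ((1 - v) / 2)
    rw [le_div_iff₀ (by linarith)]
    have h3 := mul_le_mul_of_nonneg_right h h2.le
    rw [inv_mul_cancel₀ h2.ne'] at h3
    linarith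
  have hQ' : Q ≤ A * (2 / (1 + v)) :=
    hQ.trans (by gcongr; exact (Real.exp_le_exp.2 hexp).trans hE)
  have hQ2 : Q * (1 + v) ≤ 2 * A := by
    calc Q * (1 + v) ≤ A * (2 / (1 + v)) * (1 + v) := by gcongr
      _ = 2 * A := by field_simp
  have h1 : Q * z = (z * (e * Q)) * (v * A) := by
    calc Q * z = Q * z * (v * e * A) := by rw [hve, mul_one]
      _ = _ := by ring
  have h2 : (z * (e * Q)) * (v * A) ≤ (2 * Q - 1) * (v * A) := by gcongr
  have h3 : (2 * Q - 1) * v ≤ 2 * A - 1 := by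
    have h4 : (2 * Q - 1) * v * (1 + v) ≤ (2 * A - 1) * (1 + v) := by
      have h5 : v * (Q * (1 + v)) ≤ v * (2 * A) := by gcongr
      nlinarith [mul_nonneg (sub_nonneg.2 hv1) (by linarith : 0 ≤ 2 * A - 1 - v)]
    exact le_of_mul_le_mul_right h4 (by linarith)
  nlinarith

lemma numeric_step (k c : ℕ) (hc : 1 ≤ c) (B : ℝ) (hB : 42 ≤ B) (hcB : 5 * (c + 1 : ℝ) ≤ B)
    (hkB : sylvPred k ≤ B)
    (h : (3 * c / 2 : ℝ) ^ c * sylvPred k ^ (c + 1) ≤ B * (2 * B - 1)) :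
    (3 * (c + 1 : ℕ) / 2 : ℝ) ^ (c + 1) * sylvPred k ^ (c + 1 + 1) ≤
      B * (B + 1) * (2 * (B * (B + 1)) - 1) := by
  have hA := one_le_sylvPred k
  have hc' : (1 : ℝ) ≤ c := by exact_mod_cast hc
  have hp : ((c + 1 : ℝ)) ^ c ≤ 3 * (c : ℝ) ^ c := by
    have h1 : (1 + 1 / (c : ℝ)) ^ c ≤ 3 := by
      calc (1 + 1 / (c : ℝ)) ^ c ≤ Real.exp (1 / c) ^ c := by
            gcongr
            linarith [Real.add_one_le_exp (1 / (c : ℝ))]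
        _ = Real.exp 1 := by rw [← Real.exp_nat_mul]; congr 1; field_simp
        _ ≤ 3 := by linarith [Real.exp_one_lt_d9]
    calc ((c + 1 : ℝ)) ^ c = (1 + 1 / (c : ℝ)) ^ c * (c : ℝ) ^ c := by
          rw [← mul_pow]; congr 1; field_simp
      _ ≤ _ := by gcongr
  have h2 : (3 * (c + 1 : ℕ) / 2 : ℝ) ^ (c + 1) ≤ (9 / 2 * (c + 1)) * (3 * c / 2 : ℝ) ^ c := by
    have e1 : (3 * (c + 1 : ℕ) / 2 : ℝ) ^ (c + 1) =
        (3 / 2) * (c + 1) * ((3 / 2) ^ c * (c + 1 : ℝ) ^ c) := by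
      rw [← mul_pow, pow_succ]; push_cast
      rw [show (3 * (c + 1) / 2 : ℝ) = 3 / 2 * (c + 1) by ring]; ring
    have e2 : (3 * c / 2 : ℝ) ^ c = (3 / 2) ^ c * (c : ℝ) ^ c := by
      rw [← mul_pow]; congr 1; ring
    rw [e1, e2]
    calc (3 / 2) * (c + 1) * ((3 / 2) ^ c * (c + 1 : ℝ) ^ c)
        ≤ (3 / 2) * (c + 1) * ((3 / 2) ^ c * (3 * (c : ℝ) ^ c)) := by gcongr
      _ = _ := by ring
  calc _ ≤ (9 / 2 * (c + 1)) * (3 * c / 2 : ℝ) ^ c * sylvPred k ^ (c + 1 + 1) := by gcongr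
    _ = (9 / 2 * (c + 1)) * sylvPred k * ((3 * c / 2 : ℝ) ^ c * sylvPred k ^ (c + 1)) := by ring
    _ ≤ (9 / 2 * (c + 1)) * sylvPred k * (B * (2 * B - 1)) := by gcongr
    _ ≤ B * B * (B * (2 * B - 1)) := by
      have : 0 ≤ B * (2 * B - 1) := by nlinarith
      gcongr
      linarith
    _ ≤ _ := by nlinarith [mul_pos (by linarith : 0 < B) (by linarith : 0 < B)]

/-- The balanced bound `(3c/2)^c A(k)^(c+1)` lies below the sharp one as soon as `k + c ≥ 4`. -/
lemma numeric_bound (k c : ℕ) (hc : 2 ≤ c) (hkc : 4 ≤ k + c) :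
    (3 * c / 2 : ℝ) ^ c * sylvPred k ^ (c + 1) ≤
      sylvPred (k + c - 1) * (2 * sylvPred (k + c - 1) - 1) := by
  have h3 : sylvPred 3 = 42 := by norm_num [sylvPred]
  -- The induction starts at `c = max 2 (4 - k)`, where `k + c - 1 ≥ 3`.
  have key : ∀ d c₀ : ℕ, 2 ≤ c₀ → 4 ≤ k + c₀ → 5 * (c₀ + 1 : ℝ) ≤ sylvPred (k + c₀ - 1) →
      ((3 * c₀ / 2 : ℝ) ^ c₀ * sylvPred k ^ (c₀ + 1) ≤
        sylvPred (k + c₀ - 1) * (2 * sylvPred (k + c₀ - 1) - 1)) →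
      5 * ((c₀ + d : ℕ) + 1 : ℝ) ≤ sylvPred (k + (c₀ + d) - 1) ∧
      (3 * (c₀ + d : ℕ) / 2 : ℝ) ^ (c₀ + d) * sylvPred k ^ (c₀ + d + 1) ≤
        sylvPred (k + (c₀ + d) - 1) * (2 * sylvPred (k + (c₀ + d) - 1) - 1) := by
    intro d c₀ h2 h4 h5 h6
    induction d with
    | zero => exact ⟨h5, h6⟩
    | succ d ih =>
      obtain ⟨i1, i2⟩ := ih
      have hB : 42 ≤ sylvPred (k + (c₀ + d) - 1) := h3 ▸ sylvPred_mono (by omega)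
      have e : sylvPred (k + (c₀ + (d + 1)) - 1) =
          sylvPred (k + (c₀ + d) - 1) * (sylvPred (k + (c₀ + d) - 1) + 1) := by
        rw [← sylvPred_succ]; congr 1; omega
      rw [e]
      refine ⟨?_, numeric_step k (c₀ + d) (by omega) _ hB i1 (sylvPred_mono (by omega)) i2⟩
      push_cast at i1 ⊢
      nlinarith
  rcases Nat.lt_or_ge k 2 with hk | hk
  · interval_cases k
    · obtain ⟨d, rfl⟩ := Nat.exists_eq_add_of_le (show 4 ≤ c by omega)
      exact (key d 4 (by norm_num) (by norm_num) (by norm_num [sylvPred])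
        (by norm_num [sylvPred])).2
    · obtain ⟨d, rfl⟩ := Nat.exists_eq_add_of_le (show 3 ≤ c by omega)
      exact (key d 3 (by norm_num) (by norm_num) (by norm_num [sylvPred])
        (by norm_num [sylvPred])).2
  · obtain ⟨d, rfl⟩ := Nat.exists_eq_add_of_le hc
    have h6 : 6 ≤ sylvPred k := by
      have : sylvPred 2 = 6 := by norm_num [sylvPred]
      exact this ▸ sylvPred_mono hk
    refine (key d 2 le_rfl (by omega) ?_ ?_).2
    · rw [show k + 2 - 1 = k + 1 by omega, sylvPred_succ]
      push_cast; nlinarith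
    · rw [show k + 2 - 1 = k + 1 by omega, sylvPred_succ]
      generalize sylvPred k = B at *
      have : 9 * B ^ 2 ≤ (B + 1) * (2 * (B * (B + 1)) - 1) := by
        nlinarith [mul_nonneg (by linarith : 0 ≤ B - 6) (sq_nonneg B)]
      calc _ = B * (9 * B ^ 2) := by push_cast; ring
        _ ≤ B * ((B + 1) * (2 * (B * (B + 1)) - 1)) := by gcongr
        _ = _ := by ring

/-- The weighted form of `prod_le_exp`: if `r k * x (k-1) ≤ c` then
`∏_{i<k} x i ≤ A k ^ (c+1) * r k ^ c`. -/
lemma prod_le_pow (x : ℕ → ℕ) (hx : ∀ i, 0 < x i) (hm : Monotone x) (k c : ℕ)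
    (hr : 0 < remainder x k) (hk : k = 0 ∨ remainder x k * x (k - 1) ≤ c) :
    (∏ i ∈ range k, (x i : ℝ)) ≤ sylvPred k ^ (c + 1) * remainder x k ^ c := by
  rcases k with _ | k
  · simp [remainder, sylvPred]
  have hk' : remainder x (k + 1) * x k ≤ c := by simpa using hk
  have hA := one_le_sylvPred (k + 1)
  have hQ := prod_le_exp x hx hm k fun j hj =>
    curtiss x hx hm j (hr.trans_le (remainder_anti x (by omega)))
  have hC := curtiss x hx hm (k + 1) hr
  generalize remainder x (k + 1) = e at *
  generalize sylvPred (k + 1) = A at *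
  have heA : 1 ≤ e * A := (div_le_iff₀ (by linarith)).1 hC
  have hv1 : 0 ≤ 1 - 1 / (e * A) := by
    have := div_le_one_of_le₀ heA (by positivity)
    linarith
  have hexp : (e - 1 / A) * x k ≤ c * (1 - 1 / (e * A)) := by
    have : e - 1 / A = (1 - 1 / (e * A)) * e := by field_simp
    rw [this]
    nlinarith
  have h1 : Real.exp (1 - 1 / (e * A)) ≤ e * A := by
    have h := Real.add_one_le_exp (1 / (e * A) - 1)
    rw [show 1 - 1 / (e * A) = -(1 / (e * A) - 1) by ring, Real.exp_neg]
    rw [inv_le_comm₀ (Real.exp_pos _) (by positivity)]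
    rw [one_div] at h ⊢
    linarith
  calc _ ≤ A * Real.exp ((e - 1 / A) * x k) := hQ
    _ ≤ A * Real.exp (c * (1 - 1 / (e * A))) := by gcongr
    _ = A * Real.exp (1 - 1 / (e * A)) ^ c := by rw [Real.exp_nat_mul]
    _ ≤ A * (e * A) ^ c := by gcongr
    _ = _ := by rw [mul_pow]; ring

/-- The case where the last remainder is not small: the last `x i` are balanced. -/
lemma prod_le_of_large (x : ℕ → ℕ) (hx : ∀ i, 0 < x i) (hm : Monotone x) (l : ℕ) (hl : 2 ≤ l)
    (hr : 0 < remainder x (l + 1)) (hlarge : 1 / 2 < remainder x (l + 1) * x l)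
    (hlt : remainder x (l + 1) * x (l + 1) < 2) :
    (∏ i ∈ range (l + 2), (x i : ℝ)) ≤
      sylvPred (l + 1) * (2 * sylvPred (l + 1) - 1) := by
  classical
  have hrp : ∀ j ≤ l + 1, 0 < remainder x j := fun j hj => hr.trans_le (remainder_anti x hj)
  let Good : ℕ → Prop := fun k => k = 0 ∨ remainder x k * x (k - 1) ≤ ((l + 2 - k : ℕ) : ℝ)
  obtain ⟨k, hkl, hgood, hbad⟩ : ∃ k ≤ l, Good k ∧ ∀ j, k < j → j ≤ l → ¬ Good j :=
    ⟨Nat.findGreatest Good l, Nat.findGreatest_le l,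
      Nat.findGreatest_spec (P := Good) (Nat.zero_le l) (Or.inl rfl),
      fun j h1 h2 => Nat.findGreatest_is_greatest h1 h2⟩
  obtain ⟨d, rfl⟩ := Nat.exists_eq_add_of_le hkl
  have hrk := hrp k (by omega)
  have hR := hrp (k + d) (by omega)
  have hprod := prod_le_pow x hx hm k (d + 2) hrk (by
    rcases hgood with h | h
    · exact Or.inl h
    · right; rwa [show k + d + 2 - k = d + 2 by omega] at h)
  -- Remainders beyond `k` decrease at most linearly.
  have hlin : ∀ j ≤ d, ((d + 2 - j : ℝ)) * remainder x k ≤ (d + 2) * remainder x (k + j) := by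
    intro j hj
    induction j with
    | zero => simp
    | succ j ih =>
      have ih := ih (by omega)
      have hb := hbad (k + j + 1) (by omega) (by omega)
      simp only [Good, not_or, not_le, Nat.add_sub_cancel] at hb
      have hb := hb.2
      rw [show k + d + 2 - (k + j + 1) = d + 1 - j by omega, Nat.cast_sub (by omega)] at hb
      have hs := remainder_succ x (k + j)
      have h0 : (0 : ℝ) < x (k + j) := by exact_mod_cast hx (k + j)
      have hjd : (j : ℝ) + 1 ≤ d := by exact_mod_cast hj
      rw [show k + (j + 1) = k + j + 1 by ring]
      push_cast at hb ⊢
      have h1 : (d + 1 - j : ℝ) * (1 / x (k + j)) ≤ remainder x (k + j + 1) := by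
        rw [mul_one_div, div_le_iff₀ h0]; exact hb.le
      have h2 : (d + 1 - j : ℝ) * remainder x (k + j) ≤
          (d + 2 - j) * remainder x (k + j + 1) := by
        rw [show remainder x (k + j) = remainder x (k + j + 1) + 1 / x (k + j) by linarith]
        linarith
      have h3 : (d + 2 - j : ℝ) * ((d + 1 - j) * remainder x k) ≤
          (d + 2 - j) * ((d + 2) * remainder x (k + j + 1)) := by
        calc (d + 2 - j : ℝ) * ((d + 1 - j) * remainder x k)
            = (d + 1 - j) * ((d + 2 - j) * remainder x k) := by ring
          _ ≤ (d + 1 - j) * ((d + 2) * remainder x (k + j)) := by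
            gcongr; linarith
          _ = (d + 2) * ((d + 1 - j) * remainder x (k + j)) := by ring
          _ ≤ (d + 2) * ((d + 2 - j) * remainder x (k + j + 1)) := by gcongr
          _ = _ := by ring
      have h4 := le_of_mul_le_mul_left h3 (by linarith)
      linarith
  have hRk := hlin d le_rfl
  have hs := remainder_succ x (k + d)
  have hx1 : (0 : ℝ) < x (k + d) := by exact_mod_cast hx _
  have hx2 : (0 : ℝ) < x (k + d + 1) := by exact_mod_cast hx _
  have hxx : (x (k + d) : ℝ) ≤ x (k + d + 1) := by exact_mod_cast hm (Nat.le_succ _)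
  have hRx : remainder x (k + d) * x (k + d) = remainder x (k + d + 1) * x (k + d) + 1 := by
    rw [hs]; field_simp; ring
  have hex : remainder x (k + d + 1) * x (k + d) ≤ 2 := by nlinarith
  have hmid : ∀ i ∈ range d, (x (k + i) : ℝ) ≤ 3 / remainder x (k + d) := by
    intro i hi
    have hi := mem_range.1 hi
    have : (x (k + i) : ℝ) ≤ x (k + d) := by exact_mod_cast hm (by omega)
    refine this.trans ?_
    rw [le_div_iff₀ hR]
    linarith
  have hpair : (x (k + d) : ℝ) * x (k + d + 1) ≤ (3 / remainder x (k + d)) ^ 2 := by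
    rw [div_pow, le_div_iff₀ (by positivity)]
    -- With `t = r (l+1) * x l`, where `1/2 < t ≤ 2` and `l = k + d`, this reduces to
    -- `2 (t+1)² ≤ 9 t`.
    obtain ⟨t, ht⟩ : ∃ t, t = remainder x (k + d + 1) * x (k + d) := ⟨_, rfl⟩
    rw [← ht] at hRx hex hlarge
    have h1 : t * ((x (k + d) : ℝ) * x (k + d + 1) * remainder x (k + d) ^ 2) =
        (remainder x (k + d + 1) * x (k + d + 1)) * (t + 1) ^ 2 := by
      rw [← hRx, ht]; ring
    have h2 : (remainder x (k + d + 1) * x (k + d + 1)) * (t + 1) ^ 2 ≤ 2 * (t + 1) ^ 2 := by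
      gcongr
    have h3 : 2 * (t + 1) ^ 2 ≤ t * 3 ^ 2 := by nlinarith
    exact le_of_mul_le_mul_left (h1.trans_le (h2.trans h3)) (by linarith)
  have hR3 : 3 / remainder x (k + d) ≤ (3 * (d + 2 : ℕ) / 2) / remainder x k := by
    rw [div_le_div_iff₀ hR hrk]
    push_cast
    linarith
  have hsplit : (∏ i ∈ range (k + d + 2), (x i : ℝ)) =
      (∏ i ∈ range k, (x i : ℝ)) * ((∏ i ∈ range d, (x (k + i) : ℝ)) *
        (x (k + d) * x (k + d + 1))) := by
    rw [prod_range_succ, prod_range_succ, prod_range_add]; ring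
  have htail : (∏ i ∈ range d, (x (k + i) : ℝ)) * (x (k + d) * x (k + d + 1)) ≤
      ((3 * (d + 2 : ℕ) / 2) / remainder x k) ^ (d + 2) := by
    calc _ ≤ (3 / remainder x (k + d)) ^ d * (3 / remainder x (k + d)) ^ 2 := by
          gcongr
          calc _ ≤ ∏ i ∈ range d, (3 / remainder x (k + d)) :=
                prod_le_prod (fun i _ => by positivity) hmid
            _ = _ := by rw [prod_const, card_range]
      _ = (3 / remainder x (k + d)) ^ (d + 2) := by rw [pow_add]
      _ ≤ _ := by gcongr
  rw [hsplit]
  calc _ ≤ (sylvPred k ^ (d + 2 + 1) * remainder x k ^ (d + 2)) *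
        ((3 * (d + 2 : ℕ) / 2) / remainder x k) ^ (d + 2) := by
        have hA := one_le_sylvPred k
        gcongr
    _ = (3 * (d + 2 : ℕ) / 2 : ℝ) ^ (d + 2) * sylvPred k ^ (d + 2 + 1) := by
        rw [div_pow]; field_simp
    _ ≤ _ := numeric_bound k (d + 2) (by omega) (by omega)

/-- The case of three unit fractions. -/
lemma prod_le_two (x y : ℕ) (hx : 0 < x) (hxy : x ≤ y) (h1 : x + y < x * y)
    (h2 : x * y < y + 2 * x) : x * y ≤ 6 := by
  have h3 : x < 3 := by nlinarith
  interval_cases x <;> omega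

/-- The case of four unit fractions. -/
lemma prod_le_three (x y z : ℕ) (hx : 0 < x) (hxy : x ≤ y) (hyz : y ≤ z)
    (h1 : y * z + x * z + x * y < x * y * z)
    (h2 : x * y * z < y * z + x * z + 2 * (x * y)) : x * y * z ≤ 66 := by
  have h3 : x < 4 := by
    by_contra! h
    nlinarith [Nat.mul_le_mul h (le_refl (y * z)), Nat.mul_le_mul hxy (le_refl z),
      Nat.mul_le_mul (le_refl x) hyz]
  have h4 : y < 6 := by
    by_contra! h
    have : 6 * z ≤ y * z := Nat.mul_le_mul h le_rfl
    interval_cases x <;> nlinarith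
  interval_cases x <;> interval_cases y <;> omega

lemma prod_le_bound (x : ℕ → ℕ) (hx : ∀ i, 0 < x i) (hm : Monotone x) (l : ℕ)
    (hr : 0 < remainder x (l + 2)) (hlt : remainder x (l + 2) * x (l + 2) < 1) :
    (∏ i ∈ range (l + 2), (x i : ℝ)) ≤
      sylvPred (l + 1) * (2 * sylvPred (l + 1) - 1) := by
  have hr1 : 0 < remainder x (l + 1) := hr.trans_le (remainder_anti x (by omega))
  have hx1 : (0 : ℝ) < x (l + 1) := by exact_mod_cast hx _
  have hxx : (x (l + 1) : ℝ) ≤ x (l + 2) := by exact_mod_cast hm (by omega)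
  have hlt' : remainder x (l + 1) * x (l + 1) < 2 := by
    have e : remainder x (l + 1) * x (l + 1) = remainder x (l + 2) * x (l + 1) + 1 := by
      rw [remainder_succ x (l + 1)]; field_simp; ring
    nlinarith
  rcases Nat.lt_or_ge l 2 with hl | hl
  · have p0 : (0 : ℝ) < x 0 := by exact_mod_cast hx 0
    have p1 : (0 : ℝ) < x 1 := by exact_mod_cast hx 1
    have p2 : (0 : ℝ) < x 2 := by exact_mod_cast hx 2
    interval_cases l
    · have e1 : remainder x 2 * (x 0 * x 1) = x 0 * x 1 - (x 0 + x 1) := by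
        simp [remainder, sum_range_succ]; field_simp; ring
      have e2 : remainder x 1 * x 0 = x 0 - 1 := by
        simp [remainder]; field_simp
      have h1 : (x 0 + x 1 : ℝ) < x 0 * x 1 := by
        have : 0 < remainder x 2 * (x 0 * x 1) := mul_pos hr (mul_pos p0 p1)
        linarith
      have h2 : (x 0 * x 1 : ℝ) < x 1 + 2 * x 0 := by
        have := mul_lt_mul_of_pos_right hlt' p0
        norm_num at this
        nlinarith
      have := prod_le_two (x 0) (x 1) (hx 0) (hm (by omega)) (by exact_mod_cast h1)
        (by exact_mod_cast h2)
      have h6 : (x 0 * x 1 : ℝ) ≤ 6 := by exact_mod_cast this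
      norm_num [prod_range_succ, sylvPred]
      linarith
    · have e1 : remainder x 3 * (x 0 * x 1 * x 2) =
          x 0 * x 1 * x 2 - (x 1 * x 2 + x 0 * x 2 + x 0 * x 1) := by
        simp [remainder, sum_range_succ]; field_simp
      have e2 : remainder x 2 * (x 0 * x 1) = x 0 * x 1 - (x 0 + x 1) := by
        simp [remainder, sum_range_succ]; field_simp; ring
      have h1 : (x 1 * x 2 + x 0 * x 2 + x 0 * x 1 : ℝ) < x 0 * x 1 * x 2 := by
        have : 0 < remainder x 3 * (x 0 * x 1 * x 2) :=
          mul_pos hr (mul_pos (mul_pos p0 p1) p2)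
        linarith
      have h2 : (x 0 * x 1 * x 2 : ℝ) < x 1 * x 2 + x 0 * x 2 + 2 * (x 0 * x 1) := by
        have := mul_lt_mul_of_pos_right hlt' (mul_pos p0 p1)
        norm_num at this
        have e3 : remainder x 2 * x 2 * (x 0 * x 1) = (x 0 * x 1 - (x 0 + x 1)) * x 2 := by
          rw [← e2]; ring
        rw [e3] at this
        linarith
      have := prod_le_three (x 0) (x 1) (x 2) (hx 0) (hm (by omega)) (hm (by omega))
        (by exact_mod_cast h1) (by exact_mod_cast h2)
      have h6 : (x 0 * x 1 * x 2 : ℝ) ≤ 66 := by exact_mod_cast this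
      norm_num [prod_range_succ, sylvPred]
      linarith
  · rcases le_or_gt (remainder x (l + 1) * x l) (1 / 2) with h | h
    · exact prod_le_of_small x hx hm l hr1 h hlt'
    · exact prod_le_of_large x hx hm l hl hr1 h hlt'

/-- The lower bound for `F`, in terms of the increasing sequence `x`. -/
lemma lower_bound (x : ℕ → ℕ) (hx : ∀ i, 0 < x i) (hm : Monotone x) (l : ℕ)
    (hsum : 1 < ∑ i ∈ range (l + 3), 1 / (x i : ℝ)) :
    1 / (sylvPred (l + 1) * (2 * sylvPred (l + 1) - 1)) ≤
      (x (l + 2) : ℝ) * (∑ i ∈ range (l + 3), 1 / (x i : ℝ) - 1) := by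
  have hA := one_le_sylvPred (l + 1)
  have hM : 1 ≤ sylvPred (l + 1) * (2 * sylvPred (l + 1) - 1) := by nlinarith
  have hz : (0 : ℝ) < x (l + 2) := by exact_mod_cast hx _
  have hF : (x (l + 2) : ℝ) * (∑ i ∈ range (l + 3), 1 / (x i : ℝ) - 1) =
      1 - remainder x (l + 2) * x (l + 2) := by
    rw [sum_range_succ, remainder]; field_simp; ring
  have hFpos : 0 < (x (l + 2) : ℝ) * (∑ i ∈ range (l + 3), 1 / (x i : ℝ) - 1) :=
    mul_pos hz (by linarith)
  rw [hF] at hFpos ⊢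
  rcases le_or_gt (remainder x (l + 2)) 0 with h | h
  · have h1 : 1 / (sylvPred (l + 1) * (2 * sylvPred (l + 1) - 1)) ≤ 1 :=
      div_le_one_of_le₀ hM (by linarith)
    nlinarith
  · have hP := prod_le_bound x hx hm l h (by linarith)
    have hP0 := prod_cast_pos x hx (l + 2)
    obtain ⟨p, hp⟩ := exists_int x hx (l + 2)
    have e : (1 - remainder x (l + 2) * x (l + 2)) * ∏ i ∈ range (l + 2), (x i : ℝ) =
        ((∏ i ∈ range (l + 2), (x i : ℤ) - p * x (l + 2) : ℤ) : ℝ) := by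
      push_cast; rw [← hp]; ring
    have h1 : 1 ≤ (1 - remainder x (l + 2) * x (l + 2)) * ∏ i ∈ range (l + 2), (x i : ℝ) := by
      have h2 := mul_pos hFpos hP0
      rw [e] at h2 ⊢
      have : 0 < ∏ i ∈ range (l + 2), (x i : ℤ) - p * x (l + 2) := by exact_mod_cast h2
      exact_mod_cast this
    calc _ ≤ 1 / ∏ i ∈ range (l + 2), (x i : ℝ) := by gcongr
      _ ≤ _ := by rw [div_le_iff₀ hP0]; exact h1

lemma cast_sylvester (s : ℕ → ℕ) (hs1 : s 1 = 2)
    (hrec : ∀ k, 1 ≤ k → s (k + 1) = s k ^ 2 - s k + 1) (k : ℕ) :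
    (s (k + 1) : ℝ) = sylvPred k + 1 := by
  induction k with
  | zero => norm_num [hs1, sylvPred]
  | succ k ih =>
    rw [hrec (k + 1) (by omega)]
    have : s (k + 1) ≤ s (k + 1) ^ 2 := Nat.le_self_pow (by norm_num) _
    push_cast [Nat.cast_sub this]
    rw [ih, sylvPred_succ]; ring

lemma sum_sylvester (s : ℕ → ℕ) (hs1 : s 1 = 2)
    (hrec : ∀ k, 1 ≤ k → s (k + 1) = s k ^ 2 - s k + 1) (k : ℕ) :
    ∑ i ∈ range k, 1 / (s (i + 1) : ℝ) = 1 - 1 / sylvPred k := by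
  induction k with
  | zero => simp [sylvPred]
  | succ k ih =>
    rw [sum_range_succ, ih, one_div_sylvPred_succ, cast_sylvester s hs1 hrec]; ring


/-- Let `s` be the Sylvester sequence, `s 1 = 2` and `s (k+1) = s k ² − s k + 1`.  For every
`n ≥ 2` and all positive non-increasing integers `a₀ ≥ a₁ ≥ ⋯ ≥ aₙ` with `Σ 1/aᵢ > 1` one has
`a₀·(Σ 1/aᵢ − 1) ≥ 1/((sₙ − 1)(2sₙ − 3))`, and the bound is attained by the tuple with
`aᵢ = s_{n+1−i}` for `2 ≤ i ≤ n`, `a₁ = 2sₙ − 3`, `a₀ = 2sₙ − 1`. -/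
theorem brieskorn_pham_general_bound (s : ℕ → ℕ) (hs1 : s 1 = 2)
    (hrec : ∀ k, 1 ≤ k → s (k + 1) = s k ^ 2 - s k + 1) (n : ℕ) (hn : 2 ≤ n) :
    (∀ a : Fin (n + 1) → ℕ, (∀ i, 0 < a i) →
      (∀ i j : Fin (n + 1), i ≤ j → a j ≤ a i) →
      1 < ∑ i, (1 : ℚ) / a i →
      (1 : ℚ) / (((s n : ℚ) - 1) * (2 * (s n : ℚ) - 3)) ≤
        (a 0 : ℚ) * (∑ i, (1 : ℚ) / a i - 1)) ∧
    (∀ a : Fin (n + 1) → ℕ,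
      (∀ i : Fin (n + 1), 2 ≤ (i : ℕ) → a i = s (n + 1 - (i : ℕ))) →
      a 1 = 2 * s n - 3 → a 0 = 2 * s n - 1 →
      (∀ i, 0 < a i) ∧ (∀ i j : Fin (n + 1), i ≤ j → a j ≤ a i) ∧
      1 < ∑ i, (1 : ℚ) / a i ∧
      (a 0 : ℚ) * (∑ i, (1 : ℚ) / a i - 1) =
        (1 : ℚ) / (((s n : ℚ) - 1) * (2 * (s n : ℚ) - 3))) := by
  have hs := cast_sylvester s hs1 hrec
  obtain ⟨l, rfl⟩ := Nat.exists_eq_add_of_le' hn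
  have hsn : (s (l + 2) : ℝ) = sylvPred (l + 1) + 1 := hs (l + 1)
  have hA2 : 2 ≤ sylvPred (l + 1) := by
    have : sylvPred 1 = 2 := by norm_num [sylvPred]
    exact this ▸ sylvPred_mono (by omega)
  have hbound : (1 : ℝ) / (((s (l + 2) : ℝ) - 1) * (2 * (s (l + 2) : ℝ) - 3)) =
      1 / (sylvPred (l + 1) * (2 * sylvPred (l + 1) - 1)) := by
    rw [hsn]; congr 2 <;> ring
  refine ⟨fun a ha hanti hsum => ?_, fun a h2 h1 h0 => ?_⟩
  · -- Truncated subtraction makes `x` constant, equal to `a 0`, from index `n` on.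
    let x : ℕ → ℕ := fun i => a ⟨l + 2 - i, by omega⟩
    have hm : Monotone x := fun i j hij => hanti _ _ (by simp only [Fin.mk_le_mk]; omega)
    have hS : ∑ i, (1 : ℝ) / a i = ∑ i ∈ range (l + 3), 1 / (x i : ℝ) := by
      rw [← Fin.sum_univ_eq_sum_range (fun i => 1 / (x i : ℝ)), ← Equiv.sum_comp Fin.revPerm]
      refine Fintype.sum_congr _ _ fun i => ?_
      congr 3
      ext
      simp [Fin.val_rev]
    have hx0 : x (l + 2) = a 0 := by
      simp only [x]; congr 1; ext; simp
    have hsumR : (1 : ℝ) < ∑ i, (1 : ℝ) / a i := by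
      rw [← Rat.cast_lt (K := ℝ)] at hsum
      push_cast at hsum
      exact hsum
    have key := lower_bound x (fun i => ha _) hm l (hS ▸ hsumR)
    rw [← hS, hx0, ← hbound] at key
    rw [← Rat.cast_le (K := ℝ)]
    push_cast
    exact key
  · have hmono : ∀ i j, 1 ≤ i → i ≤ j → s i ≤ s j := by
      intro i j hi hij
      obtain ⟨i, rfl⟩ := Nat.exists_eq_add_of_le' hi
      obtain ⟨j, rfl⟩ := Nat.exists_eq_add_of_le' (hi.trans hij)
      have : (s (i + 1) : ℝ) ≤ s (j + 1) := by
        rw [hs, hs]; linarith [sylvPred_mono (show i ≤ j by omega)]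
      exact_mod_cast this
    have hs3 : 3 ≤ s (l + 2) := by
      have : (3 : ℝ) ≤ s (l + 2) := by rw [hsn]; linarith
      exact_mod_cast this
    have hv1 : ((1 : Fin (l + 2 + 1)) : ℕ) = 1 := by simp
    have hpos : ∀ i, 0 < a i := by
      intro i
      rcases Nat.lt_or_ge (i : ℕ) 2 with hi | hi
      · rcases (show (i : ℕ) = 0 ∨ (i : ℕ) = 1 by omega) with h | h
        · rw [show i = 0 from Fin.ext h, h0]; omega
        · rw [show i = 1 from Fin.ext (h.trans hv1.symm), h1]; omega
      · rw [h2 i hi]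
        have := hmono 1 (l + 2 + 1 - i) le_rfl (by omega)
        omega
    have hanti : ∀ i j : Fin (l + 2 + 1), i ≤ j → a j ≤ a i := by
      intro i j hij
      have hij' : (i : ℕ) ≤ j := hij
      rcases Nat.lt_or_ge (j : ℕ) 2 with hj | hj
      · rcases (show (j : ℕ) = 0 ∨ (j : ℕ) = 1 by omega) with h | h
        · rw [show i = j from Fin.ext (by omega)]
        · rcases (show (i : ℕ) = 0 ∨ (i : ℕ) = 1 by omega) with h' | h'
          · rw [show i = 0 from Fin.ext h', show j = 1 from Fin.ext (h.trans hv1.symm), h0, h1]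
            omega
          · rw [show i = j from Fin.ext (by omega)]
      · rw [h2 j hj]
        rcases Nat.lt_or_ge (i : ℕ) 2 with hi | hi
        · have := hmono (l + 2 + 1 - j) (l + 2) (by omega) (by omega)
          rcases (show (i : ℕ) = 0 ∨ (i : ℕ) = 1 by omega) with h | h
          · rw [show i = 0 from Fin.ext h, h0]; omega
          · rw [show i = 1 from Fin.ext (h.trans hv1.symm), h1]; omega
        · rw [h2 i hi]
          exact hmono _ _ (by omega) (by omega)
    have ha0 : (a 0 : ℝ) = 2 * sylvPred (l + 1) + 1 := by
      rw [h0, Nat.cast_sub (by omega)]; push_cast; rw [hsn]; ring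
    have ha1 : (a 1 : ℝ) = 2 * sylvPred (l + 1) - 1 := by
      rw [h1, Nat.cast_sub (by omega)]; push_cast; rw [hsn]; ring
    have hS : ∑ i, (1 : ℝ) / a i = 1 / (2 * sylvPred (l + 1) + 1) +
        (1 / (2 * sylvPred (l + 1) - 1) + (1 - 1 / sylvPred (l + 1))) := by
      rw [Fin.sum_univ_succ, Fin.sum_univ_succ, Fin.succ_zero_eq_one, ha0, ha1]
      congr 2
      rw [← sum_sylvester s hs1 hrec, ← sum_range_reflect,
        ← Fin.sum_univ_eq_sum_range
          (fun i => 1 / (s (l + 1 - 1 - i + 1) : ℝ))]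
      refine Fintype.sum_congr _ _ fun i => ?_
      rw [h2 _ (by simp)]
      congr 3
      have := i.isLt
      simp only [Fin.val_succ]
      omega
    have hF : (a 0 : ℝ) * (∑ i, (1 : ℝ) / a i - 1) =
        1 / (((s (l + 2) : ℝ) - 1) * (2 * (s (l + 2) : ℝ) - 3)) := by
      rw [hS, ha0, hbound]
      have e1 : 2 * sylvPred (l + 1) + 1 ≠ 0 := by linarith
      have e2 : 2 * sylvPred (l + 1) - 1 ≠ 0 := by linarith
      have e3 : sylvPred (l + 1) ≠ 0 := by linarith
      field_simp
      ring
    have hgt : (1 : ℝ) < ∑ i, (1 : ℝ) / a i := by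
      have hp : 0 < (a 0 : ℝ) * (∑ i, (1 : ℝ) / a i - 1) := by
        rw [hF, hbound]
        exact one_div_pos.2 (mul_pos (by linarith) (by linarith))
      have := pos_of_mul_pos_right hp (Nat.cast_nonneg _)
      linarith
    refine ⟨hpos, hanti, ?_, ?_⟩
    · rw [← Rat.cast_lt (K := ℝ)]
      push_cast
      exact hgt
    · rw [← Rat.cast_inj (α := ℝ)]
      push_cast
      exact hF
end

section
/- Identify ℝ⁸ with two copies of ℝ⁴ with coordinates (a_i, b_i, c_i, d_i) for i = 1, 2, and set x_i = a_i² + b_i² − c_i² − d_i², y_i = 2(a_i c_i + b_i d_i), t_i = 2(a_i d_i − b_i c_i). Then the polynomial P = x_1 x_2 + y_1 y_2 + t_1 t_2 is a nonzero harmonic polynomial on ℝ⁸, homogeneous of degree 4, and invariant under the swap of the two ℝ⁴ blocks (a_1,b_1,c_1,d_1) ↔ (a_2,b_2,c_2,d_2). -/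
/-!
Each of `xᵢ`, `yᵢ`, `tᵢ` is a quadratic form in the `i`-th block alone, and is harmonic there: the
diagonal of `xᵢ` has trace zero, while `yᵢ` and `tᵢ` have no square terms. The factors of each of
`x₁x₂`, `y₁y₂`, `t₁t₂` use disjoint variables, so the Laplacian of the product is
`(Δf) g + f (Δg) = 0`; below this is carried out by direct differentiation. The polynomial takes
the value `1` where `a₁ = a₂ = 1` and all other coordinates vanish, so it is nonzero. Homogeneity
follows from the degree `2` of each factor, and the block swap merely exchanges the two factors of
each product.
-/

open MvPolynomial

/-- `xᵢ = aᵢ² + bᵢ² − cᵢ² − dᵢ²`, the first quadratic component of the Hopf map on the `i`-th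
`ℝ⁴` block of `ℝ⁸` (with coordinates `(aᵢ, bᵢ, cᵢ, dᵢ)` indexed by `(i, 0), …, (i, 3)`). -/
noncomputable def hopfX (i : Fin 2) : MvPolynomial (Fin 2 × Fin 4) ℝ :=
  X (i, 0) ^ 2 + X (i, 1) ^ 2 - X (i, 2) ^ 2 - X (i, 3) ^ 2

/-- `yᵢ = 2(aᵢcᵢ + bᵢdᵢ)`. -/
noncomputable def hopfY (i : Fin 2) : MvPolynomial (Fin 2 × Fin 4) ℝ :=
  2 * (X (i, 0) * X (i, 2) + X (i, 1) * X (i, 3))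

/-- `tᵢ = 2(aᵢdᵢ − bᵢcᵢ)`. -/
noncomputable def hopfT (i : Fin 2) : MvPolynomial (Fin 2 × Fin 4) ℝ :=
  2 * (X (i, 0) * X (i, 3) - X (i, 1) * X (i, 2))

theorem hopfX_isHomogeneous (i : Fin 2) : (hopfX i).IsHomogeneous 2 := by
  have h (j : Fin 4) : (X (i, j) ^ 2 : MvPolynomial (Fin 2 × Fin 4) ℝ).IsHomogeneous 2 :=
    isHomogeneous_X_pow _ _
  exact (((h 0).add (h 1)).sub (h 2)).sub (h 3)

theorem isHomogeneous_two_mul {p : MvPolynomial (Fin 2 × Fin 4) ℝ} {n : ℕ}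
    (hp : p.IsHomogeneous n) : (2 * p).IsHomogeneous n := by
  rw [two_mul]
  exact hp.add hp

theorem hopfY_isHomogeneous (i : Fin 2) : (hopfY i).IsHomogeneous 2 :=
  isHomogeneous_two_mul
    (((isHomogeneous_X ℝ _).mul (isHomogeneous_X ℝ _)).add
      ((isHomogeneous_X ℝ _).mul (isHomogeneous_X ℝ _)))

theorem hopfT_isHomogeneous (i : Fin 2) : (hopfT i).IsHomogeneous 2 :=
  isHomogeneous_two_mul
    (((isHomogeneous_X ℝ _).mul (isHomogeneous_X ℝ _)).sub
      ((isHomogeneous_X ℝ _).mul (isHomogeneous_X ℝ _)))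

/-- The polynomial `P = x₁x₂ + y₁y₂ + t₁t₂` is a nonzero harmonic polynomial on `ℝ⁸`,
homogeneous of degree `4`, invariant under swapping the two `ℝ⁴` blocks. -/
theorem hopf_pairing_harmonic :
    (hopfX 0 * hopfX 1 + hopfY 0 * hopfY 1 + hopfT 0 * hopfT 1) ≠ 0 ∧
    IsHarmonic (hopfX 0 * hopfX 1 + hopfY 0 * hopfY 1 + hopfT 0 * hopfT 1) ∧
    (hopfX 0 * hopfX 1 + hopfY 0 * hopfY 1 + hopfT 0 * hopfT 1).IsHomogeneous 4 ∧
    rename (Equiv.prodCongr (Equiv.swap (0 : Fin 2) 1) (Equiv.refl (Fin 4)))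
        (hopfX 0 * hopfX 1 + hopfY 0 * hopfY 1 + hopfT 0 * hopfT 1)
      = hopfX 0 * hopfX 1 + hopfY 0 * hopfY 1 + hopfT 0 * hopfT 1 := by
  refine ⟨?_, ?_, ?_, ?_⟩
  · intro h
    -- Evaluate at the point with `a₁ = a₂ = 1` and all other coordinates zero.
    have h' := congrArg (eval fun q : Fin 2 × Fin 4 => if q.2 = 0 then (1 : ℝ) else 0) h
    simp [hopfX, hopfY, hopfT] at h'
  · have h2 (q : Fin 2 × Fin 4) : pderiv q (2 : MvPolynomial (Fin 2 × Fin 4) ℝ) = 0 :=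
      pderiv_C (a := (2 : ℝ))
    simp [IsHarmonic, polyLap, Fintype.sum_prod_type, Fin.sum_univ_succ, hopfX, hopfY, hopfT,
      pderiv_X, Pi.single_apply, Derivation.leibniz, Derivation.leibniz_pow, h2]
  · exact (((hopfX_isHomogeneous 0).mul (hopfX_isHomogeneous 1)).add
      ((hopfY_isHomogeneous 0).mul (hopfY_isHomogeneous 1))).add
      ((hopfT_isHomogeneous 0).mul (hopfT_isHomogeneous 1))
  · have h2 (f : Fin 2 × Fin 4 → Fin 2 × Fin 4) :
        rename f (2 : MvPolynomial (Fin 2 × Fin 4) ℝ) = 2 := map_ofNat (rename f) 2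
    simp [hopfX, hopfY, hopfT, h2]
    ring
end
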